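/- arXiv:math-ph/9905008 — 2 statements merged into one kernel-verified Lean document; each statement's English description precedes it below -/
import Mathlib

section
/- For every λ ∈ ℝ \ {0}, every irrational α ∈ (0,1), all θ, θ' ∈ [0,1), and every E in the spectrum of the operator H_{λ,α,θ'}, the limit lim_{n→∞} (1/n)·ln‖M(λ,E,v_{α,θ}^n)‖ exists and equals 0. -/
open scoped Classical

noncomputable section

/-- The Sturmian potential `v_{α,θ}(n) = χ_{[1-α,1)}(nα + θ mod 1)`. -/
def sturmian (α θ : ℝ) (n : ℤ) : ℝ :=
  if Int.fract (n * α + θ) ∈ Set.Ico (1 - α) 1 then 1 else 0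

/-- Iterates of the Gauss map, starting at `α`. -/
def cfGauss (α : ℝ) : ℕ → ℝ
  | 0 => α
  | n + 1 => Int.fract (cfGauss α n)⁻¹

/-- The continued fraction coefficients `a_n` of `α = [a_1, a_2, …]` (for `n ≥ 1`):
`a_1 = ⌊1/α⌋`, `a_2 = ⌊1/fract(1/α)⌋`, … . -/
def cfCoeff (α : ℝ) (n : ℕ) : ℕ := ⌊(cfGauss α (n - 1))⁻¹⌋₊

/-- The standard words, with an index shift: `sWord a n` is `s_{n-1}`.  Thus
`sWord a 0 = s_{-1} = 1`, `sWord a 1 = s_0 = 0`, `sWord a 2 = s_1 = 0^{a_1 - 1} 1`, and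
`sWord a (n+1) = s_n = s_{n-1}^{a_n} s_{n-2}` for `n ≥ 2`. -/
def sWord (a : ℕ → ℕ) : ℕ → List ℝ
  | 0 => [1]
  | 1 => [0]
  | 2 => List.replicate (a 1 - 1) (0 : ℝ) ++ [1]
  | n + 3 => (List.replicate (a (n + 2)) (sWord a (n + 2))).flatten ++ sWord a (n + 1)

/-- The `n`-th letter (for `n ≥ 1`) of the one-sided infinite word `c_α = lim s_n`:
since `|s_n| ≥ n`, it is the `n`-th letter of `s_n`. -/
def cword (α : ℝ) (n : ℕ) : ℝ := (sWord (cfCoeff α) (n + 1)).getD (n - 1) 0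

/-- `w` is a (finite) prefix of the one-sided infinite word `c_α`. -/
def IsPrefC (α : ℝ) (w : List ℝ) : Prop :=
  w = (List.range w.length).map fun i => cword α (i + 1)

/-- The one-step transfer matrix `T(λ,E,a) = [[E - λa, -1], [1, 0]]`. -/
def transferT (lam : ℝ) (E : ℂ) (a : ℝ) : Matrix (Fin 2) (Fin 2) ℂ :=
  !![E - lam * a, -1; 1, 0]

/-- The transfer matrix over a word `w = w_1 … w_n`:
`M(λ,E,w) = T(λ,E,w_n) ⋯ T(λ,E,w_1)`. -/
def transferM (lam : ℝ) (E : ℂ) : List ℝ → Matrix (Fin 2) (Fin 2) ℂ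
  | [] => 1
  | a :: w => transferM lam E w * transferT lam E a

/-- The operator norm on `ℂ²` (with the euclidean norm) of a `2 × 2` complex matrix. -/
def opNorm (A : Matrix (Fin 2) (Fin 2) ℂ) : ℝ :=
  ‖Matrix.toEuclideanCLM (𝕜 := ℂ) A‖

/-- The word `v_{α,θ}^n = v_{α,θ}(1) … v_{α,θ}(n)`. -/
def sturmianWord (α θ : ℝ) (n : ℕ) : List ℝ :=
  (List.range n).map fun k => sturmian α θ (k + 1)

/-- The set of finite nonempty subwords of a two-sided sequence `v : ℤ → ℝ`. -/
def SubZ (v : ℤ → ℝ) : Set (List ℝ) :=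
  {w | w ≠ [] ∧ ∃ k : ℤ, w = (List.range w.length).map fun i => v (k + i)}

/-- The set of finite nonempty subwords of the one-sided word `c_α` (indexed from `1`). -/
def SubC (α : ℝ) : Set (List ℝ) :=
  {w | w ≠ [] ∧ ∃ k : ℕ, 1 ≤ k ∧ w = (List.range w.length).map fun i => cword α (k + i)}

/-- `W_α`, the set of all finite nonempty subwords of the sequences `v_{α,θ}`, `θ ∈ [0,1)`. -/
def Walpha (α : ℝ) : Set (List ℝ) :=
  {w | ∃ θ ∈ Set.Ico (0 : ℝ) 1, w ∈ SubZ (sturmian α θ)}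

/-- `α` is a bounded density number: `limsup_{n→∞} (1/n) ∑_{j=1}^n a_j < ∞` for the
continued fraction coefficients `a_j` of `α`. -/
def BoundedDensity (α : ℝ) : Prop :=
  Filter.IsBoundedUnder (· ≤ ·) Filter.atTop
    (fun n : ℕ => (1 / n : ℝ) * ∑ j ∈ Finset.Icc 1 n, (cfCoeff α j : ℝ))

end

noncomputable section

lemma sturmianWord_eq (α x : ℝ) (n : ℕ) :
    sturmianWord α x n = (List.range n).map fun k : ℕ => sturmian α x ((k : ℤ) + 1) := by
  unfold sturmianWord
  simp only [List.bind_eq_flatMap, List.pure_def, List.map_flatMap, List.map_cons, List.map_nil]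
  rw [← List.map_eq_flatMap]

/-! ### Number theory: good scales -/

/-- Existence of arbitrarily large good denominators. -/
lemma exists_good_scale (α : ℝ) (hirr : Irrational α) (m : ℕ) :
    ∃ q q' : ℕ, ∃ p p' : ℤ, m < q ∧ 1 ≤ q' ∧ q' < q ∧
      |q * α - p| < |q' * α - p'| ∧ |q' * α - p'| ≤ 1 ∧ 0 < |q * α - p| ∧
      (∀ j : ℕ, 1 ≤ j → j < q → ∀ i : ℤ, |q' * α - p'| ≤ |j * α - i|) ∧
      (q * α - p) * (q' * α - p') < 0 := by
  have hne : ∀ j : ℕ, 1 ≤ j → ∀ i : ℤ, (j : ℝ) * α - i ≠ 0 := by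
    intro j hj i h
    have h1 : Irrational ((j : ℝ) * α) := by
      have := hirr.natCast_mul (m := j) (by omega)
      simpa using this
    exact h1.ne_int i (by linarith)
  -- distance to the nearest integer
  set D : ℕ → ℝ := fun j => |(j : ℝ) * α - round ((j : ℝ) * α)| with hD
  have hDle : ∀ j : ℕ, ∀ i : ℤ, D j ≤ |(j : ℝ) * α - i| := fun j i => round_le _ _
  obtain ⟨q', hq'mem, hq'min⟩ := Finset.exists_min_image (Finset.Icc 1 (m + 1)) D ⟨1, by simp⟩
  rw [Finset.mem_Icc] at hq'mem
  have hDpos : 0 < D q' := abs_pos.mpr (hne q' hq'mem.1 _)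
  have hex : ∃ j : ℕ, 1 ≤ j ∧ D j < D q' := by
    obtain ⟨N, hN⟩ := exists_nat_gt (1 / D q')
    have hNpos : 0 < N := by
      have : (0 : ℝ) < N := lt_trans (by positivity) hN
      exact_mod_cast this
    obtain ⟨j, k, hk0, hkN, hjk⟩ := Real.exists_int_int_abs_mul_sub_le α hNpos
    refine ⟨k.toNat, by omega, ?_⟩
    have hk : ((k.toNat : ℕ) : ℝ) = (k : ℝ) := by
      have : ((k.toNat : ℕ) : ℤ) = k := Int.toNat_of_nonneg hk0.le
      exact_mod_cast this
    have h1 := hDle k.toNat j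
    rw [hk] at h1
    refine lt_of_le_of_lt (h1.trans hjk) ?_
    rw [div_lt_iff₀ (by positivity)] at hN ⊢
    nlinarith
  classical
  obtain ⟨hq1, hqlt⟩ := Nat.find_spec hex
  have hqmin := fun j (h : j < Nat.find hex) => Nat.find_min hex h
  set q := Nat.find hex with hq
  have hmq : m + 1 < q := by
    by_contra h
    have := hq'min q (by rw [Finset.mem_Icc]; omega)
    linarith
  have hmin : ∀ j : ℕ, 1 ≤ j → j < q → ∀ i : ℤ, D q' ≤ |j * α - i| := by
    intro j hj hjq i
    have := hqmin j hjq
    push Not at this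
    exact (this hj).trans (hDle j i)
  refine ⟨q, q', round ((q : ℝ) * α), round ((q' : ℝ) * α), by omega, hq'mem.1, by omega, hqlt,
    ?_, abs_pos.mpr (hne q hq1 _), hmin, ?_⟩
  · exact (abs_sub_round _).trans (by norm_num)
  · by_contra h
    push Not at h
    have h3 := hmin (q - q') (by omega) (by omega)
      (round ((q : ℝ) * α) - round ((q' : ℝ) * α))
    have hqpos := abs_pos.mpr (hne q hq1 (round ((q : ℝ) * α)))
    rw [Nat.cast_sub (by omega)] at h3
    push_cast at h3
    have e : ((q : ℝ) - q') * α - (round ((q : ℝ) * α) - round ((q' : ℝ) * α)) =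
      (q * α - round ((q : ℝ) * α)) - (q' * α - round ((q' : ℝ) * α)) := by ring
    rw [e] at h3
    simp only [hD] at hqlt h3 hDpos
    generalize (q * α - round ((q : ℝ) * α)) = X at *
    generalize (q' * α - round ((q' : ℝ) * α)) = Y at *
    rcases abs_cases X with ⟨h4, h5⟩ | ⟨h4, h5⟩ <;> rcases abs_cases Y with ⟨h6, h7⟩ | ⟨h6, h7⟩ <;>
      rcases abs_cases (X - Y) with ⟨h8, h9⟩ | ⟨h8, h9⟩ <;> nlinarith

/-- Every long enough half-open interval is hit by the orbit. -/
lemma exists_hit (α : ℝ) (q q' : ℕ) (p p' : ℤ) (hq' : q' < q)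
    (hlt : |q * α - p| < |q' * α - p'|) (hpos : 0 < |q * α - p|)
    (hsgn : (q * α - p) * (q' * α - p') < 0) (y a b : ℝ) (hab : |q' * α - p'| ≤ b - a) :
    ∃ j : ℕ, ∃ i : ℤ, j < q + q' ∧ a ≤ y + j * α + i ∧ y + j * α + i < b := by
  by_contra hcon
  push Not at hcon
  have hqq : 0 < q + q' := by omega
  set δ := (q : ℝ) * α - p with hδ
  set δ' := (q' : ℝ) * α - p' with hδ'
  rcases lt_or_ge 0 δ' with hd | hd
  · have hδneg : δ < 0 := by nlinarith
    rw [abs_of_neg hδneg] at hlt hpos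
    rw [abs_of_pos hd] at hlt hab
    have key : ∀ m : ℕ, ∃ j : ℕ, ∃ i : ℤ, j < q + q' ∧ y + j * α + i < a ∧
        (y - (⌈y - a⌉ + 1 : ℤ)) + m * (-δ) ≤ y + j * α + i := by
      intro m
      induction m with
      | zero =>
        refine ⟨0, -(⌈y - a⌉ + 1), hqq, ?_, ?_⟩
        · have := Int.le_ceil (y - a)
          push_cast; linarith
        · push_cast; linarith
      | succ m ih =>
        obtain ⟨j, i, hj, h1, h2⟩ := ih
        rcases lt_or_ge j q with hjq | hjq
        · refine ⟨j + q', i - p', by omega, ?_, ?_⟩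
          · by_contra h3
            push Not at h3
            have := hcon (j + q') (i - p') (by omega) h3
            push_cast at this
            linarith
          · push_cast at *
            linarith
        · refine ⟨j - q, i + p, by omega, ?_, ?_⟩
          · by_contra h3
            push Not at h3
            have := hcon (j - q) (i + p) (by omega) h3
            rw [Nat.cast_sub hjq] at this
            push_cast at this
            linarith
          · rw [Nat.cast_sub hjq]
            push_cast at *
            linarith
    obtain ⟨m, hm⟩ := exists_nat_gt ((a - (y - (⌈y - a⌉ + 1 : ℤ))) / (-δ))
    rw [div_lt_iff₀ hpos] at hm
    obtain ⟨j, i, -, h1, h2⟩ := key m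
    linarith
  · have hd : δ' < 0 := lt_of_le_of_ne hd (by rintro h; rw [h] at hsgn; simp at hsgn)
    have hδp : 0 < δ := by nlinarith
    rw [abs_of_pos hδp] at hlt hpos
    rw [abs_of_neg hd] at hlt hab
    have key : ∀ m : ℕ, ∃ j : ℕ, ∃ i : ℤ, j < q + q' ∧ b ≤ y + j * α + i ∧
        y + j * α + i + m * δ ≤ (y + (⌈b - y⌉ : ℤ)) := by
      intro m
      induction m with
      | zero =>
        refine ⟨0, ⌈b - y⌉, hqq, ?_, ?_⟩
        · have := Int.le_ceil (b - y)
          push_cast; linarith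
        · push_cast; linarith
      | succ m ih =>
        obtain ⟨j, i, hj, h1, h2⟩ := ih
        rcases lt_or_ge j q with hjq | hjq
        · refine ⟨j + q', i - p', by omega, ?_, ?_⟩
          · refine hcon (j + q') (i - p') (by omega) ?_
            push_cast
            linarith
          · push_cast at *
            linarith
        · refine ⟨j - q, i + p, by omega, ?_, ?_⟩
          · refine hcon (j - q) (i + p) (by omega) ?_
            rw [Nat.cast_sub hjq]
            push_cast
            linarith
          · rw [Nat.cast_sub hjq]
            push_cast at *
            linarith
    obtain ⟨m, hm⟩ := exists_nat_gt (((y + (⌈b - y⌉ : ℤ)) - b) / δ)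
    rw [div_lt_iff₀ hpos] at hm
    obtain ⟨j, i, -, h1, h2⟩ := key m
    linarith

lemma sturmian_eq_floor (α θ : ℝ) (hα : α ∈ Set.Ioo (0 : ℝ) 1) (n : ℤ) :
    sturmian α θ n = ((⌊θ + (n + 1) * α⌋ - ⌊θ + n * α⌋ : ℤ) : ℝ) := by
  obtain ⟨h0, h1⟩ := hα
  have e1 : (n : ℝ) * α + θ = θ + n * α := by ring
  have e2 : θ + ((n : ℝ) + 1) * α = θ + n * α + α := by ring
  unfold sturmian
  rw [e1, e2]
  generalize θ + (n : ℝ) * α = x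
  have hf := Int.fract_add_floor x
  have hf0 := Int.fract_nonneg x
  have hf1 := Int.fract_lt_one x
  split_ifs with h
  · have : ⌊x + α⌋ = ⌊x⌋ + 1 := by
      rw [Int.floor_eq_iff]; push_cast
      constructor <;> linarith [h.1]
    rw [this]; push_cast; ring
  · have h' : Int.fract x < 1 - α := by
      by_contra h2
      exact h ⟨by linarith, hf1⟩
    have : ⌊x + α⌋ = ⌊x⌋ := by
      rw [Int.floor_eq_iff]
      constructor <;> linarith
    rw [this]; simp

/-- Recurrence: at a good scale `q`, every word of length `q - 1` is seen within `2 q` steps. -/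
lemma recurrence (α : ℝ) (hα : α ∈ Set.Ioo (0 : ℝ) 1) (q q' : ℕ) (p p' : ℤ) (hq' : q' < q)
    (hlt : |q * α - p| < |q' * α - p'|) (hle1 : |q' * α - p'| ≤ 1) (hpos : 0 < |q * α - p|)
    (hmin : ∀ j : ℕ, 1 ≤ j → j < q → ∀ i : ℤ, |q' * α - p'| ≤ |j * α - i|)
    (hsgn : (q * α - p) * (q' * α - p') < 0) (x y : ℝ) :
    ∃ j : ℕ, j < 2 * q ∧ sturmianWord α (y + j * α) (q - 1) = sturmianWord α x (q - 1) := by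
  have hne : (Finset.Icc 1 q).Nonempty := ⟨1, by simp; omega⟩
  obtain ⟨i1, hi1, ha⟩ := Finset.exists_max_image (Finset.Icc 1 q)
    (fun i : ℕ => (⌊x + i * α⌋ : ℝ) - i * α) hne
  obtain ⟨i2, hi2, hb⟩ := Finset.exists_min_image (Finset.Icc 1 q)
    (fun i : ℕ => (⌊x + i * α⌋ : ℝ) + 1 - i * α) hne
  rw [Finset.mem_Icc] at hi1 hi2
  have hx1 : (⌊x + i1 * α⌋ : ℝ) - i1 * α ≤ x := by linarith [Int.floor_le (x + i1 * α)]
  have hx2 : x < (⌊x + i2 * α⌋ : ℝ) + 1 - i2 * α := by linarith [Int.lt_floor_add_one (x + i2 * α)]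
  have hab : |q' * α - p'| ≤ ((⌊x + i2 * α⌋ : ℝ) + 1 - i2 * α) - ((⌊x + i1 * α⌋ : ℝ) - i1 * α) := by
    rcases lt_trichotomy i1 i2 with h | h | h
    · have := hmin (i2 - i1) (by omega) (by omega) (⌊x + i2 * α⌋ + 1 - ⌊x + i1 * α⌋)
      rw [Nat.cast_sub h.le] at this
      push_cast at this
      refine this.trans (le_of_eq ?_)
      rw [abs_sub_comm, abs_of_nonneg] <;> linarith
    · subst h; linarith
    · have := hmin (i1 - i2) (by omega) (by omega) (-(⌊x + i2 * α⌋ + 1 - ⌊x + i1 * α⌋))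
      rw [Nat.cast_sub h.le] at this
      push_cast at this
      refine this.trans (le_of_eq ?_)
      rw [abs_of_nonneg] <;> linarith
  obtain ⟨j, i, hj, hz1, hz2⟩ := exists_hit α q q' p p' hq' hlt hpos hsgn y _ _ hab
  refine ⟨j, by omega, ?_⟩
  have hfl : ∀ k : ℕ, 1 ≤ k → k ≤ q → ⌊y + j * α + k * α⌋ = ⌊x + k * α⌋ - i := by
    intro k hk hkq
    have h1 := ha k (by rw [Finset.mem_Icc]; omega)
    have h2 := hb k (by rw [Finset.mem_Icc]; omega)
    rw [Int.floor_eq_iff]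
    push_cast
    constructor <;> linarith
  rw [sturmianWord_eq, sturmianWord_eq]
  apply List.map_congr_left
  intro k hk
  rw [List.mem_range] at hk
  rw [sturmian_eq_floor α _ hα, sturmian_eq_floor α _ hα]
  have h1 := hfl (k + 1) (by omega) (by omega)
  have h2 := hfl (k + 2) (by omega) (by omega)
  push_cast at h1 h2 ⊢
  have e : (k : ℝ) + 1 + 1 = k + 2 := by ring
  rw [e, h1, h2]
  push_cast
  ring
/-! ### Linear algebra -/

/-- The wedge of two vectors. -/
def wed (x y : EuclideanSpace ℂ (Fin 2)) : ℂ := x 0 * y 1 - x 1 * y 0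

/-- Action of a matrix. -/
def act (A : Matrix (Fin 2) (Fin 2) ℂ) (x : EuclideanSpace ℂ (Fin 2)) :
    EuclideanSpace ℂ (Fin 2) := Matrix.toEuclideanCLM (𝕜 := ℂ) A x

lemma act_zero_coord (A : Matrix (Fin 2) (Fin 2) ℂ) (x : EuclideanSpace ℂ (Fin 2)) :
    act A x 0 = A 0 0 * x 0 + A 0 1 * x 1 := by
  simp [act, Matrix.mulVec, dotProduct, Fin.sum_univ_two]

lemma act_one_coord (A : Matrix (Fin 2) (Fin 2) ℂ) (x : EuclideanSpace ℂ (Fin 2)) :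
    act A x 1 = A 1 0 * x 0 + A 1 1 * x 1 := by
  simp [act, Matrix.mulVec, dotProduct, Fin.sum_univ_two]

lemma act_norm_le (A : Matrix (Fin 2) (Fin 2) ℂ) (x : EuclideanSpace ℂ (Fin 2)) :
    ‖act A x‖ ≤ opNorm A * ‖x‖ := ContinuousLinearMap.le_opNorm _ _

lemma act_mul (A B : Matrix (Fin 2) (Fin 2) ℂ) (x : EuclideanSpace ℂ (Fin 2)) :
    act (A * B) x = act A (act B x) := by
  simp [act, map_mul]

lemma act_add (A : Matrix (Fin 2) (Fin 2) ℂ) (x y : EuclideanSpace ℂ (Fin 2)) :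
    act A (x + y) = act A x + act A y := by simp [act]

lemma act_sub (A : Matrix (Fin 2) (Fin 2) ℂ) (x y : EuclideanSpace ℂ (Fin 2)) :
    act A (x - y) = act A x - act A y := by simp [act]

lemma act_smul (A : Matrix (Fin 2) (Fin 2) ℂ) (c : ℂ) (x : EuclideanSpace ℂ (Fin 2)) :
    act A (c • x) = c • act A x := by simp [act]

lemma opNorm_nonneg (A : Matrix (Fin 2) (Fin 2) ℂ) : 0 ≤ opNorm A := norm_nonneg _

lemma opNorm_mul_le (A B : Matrix (Fin 2) (Fin 2) ℂ) : opNorm (A * B) ≤ opNorm A * opNorm B := by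
  unfold opNorm
  rw [map_mul]
  exact norm_mul_le _ _

lemma opNorm_le (A : Matrix (Fin 2) (Fin 2) ℂ) (c : ℝ) (hc : 0 ≤ c)
    (h : ∀ x, ‖act A x‖ ≤ c * ‖x‖) : opNorm A ≤ c := ContinuousLinearMap.opNorm_le_bound _ hc h

lemma norm_sq_two (x : EuclideanSpace ℂ (Fin 2)) : ‖x‖ ^ 2 = ‖x 0‖ ^ 2 + ‖x 1‖ ^ 2 := by
  rw [EuclideanSpace.norm_sq_eq, Fin.sum_univ_two]

lemma wed_le (x y : EuclideanSpace ℂ (Fin 2)) : ‖wed x y‖ ≤ ‖x‖ * ‖y‖ := by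
  have h1 : ‖wed x y‖ ≤ ‖x 0‖ * ‖y 1‖ + ‖x 1‖ * ‖y 0‖ := by
    unfold wed
    refine (norm_sub_le _ _).trans ?_
    simp
  refine h1.trans ?_
  refine (sq_le_sq₀ (by positivity) (by positivity)).mp ?_
  rw [mul_pow, norm_sq_two, norm_sq_two]
  nlinarith [sq_nonneg (‖x 0‖ * ‖y 0‖ - ‖x 1‖ * ‖y 1‖)]

lemma wed_act (A : Matrix (Fin 2) (Fin 2) ℂ) (x y : EuclideanSpace ℂ (Fin 2)) :
    wed (act A x) (act A y) = A.det * wed x y := by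
  unfold wed
  rw [act_zero_coord, act_one_coord, act_zero_coord, act_one_coord, Matrix.det_fin_two]
  ring

/-- The rotated conjugate vector. -/
def perp (U : EuclideanSpace ℂ (Fin 2)) : EuclideanSpace ℂ (Fin 2) :=
  !₂[-(starRingEnd ℂ) (U 1), (starRingEnd ℂ) (U 0)]

lemma norm_perp (U : EuclideanSpace ℂ (Fin 2)) : ‖perp U‖ = ‖U‖ := by
  rw [← sq_eq_sq₀ (norm_nonneg _) (norm_nonneg _), norm_sq_two, norm_sq_two]
  simp [perp]
  ring

lemma decomp (U z : EuclideanSpace ℂ (Fin 2)) :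
    ((‖U‖ ^ 2 : ℝ) : ℂ) • z =
      ((starRingEnd ℂ) (U 0) * z 0 + (starRingEnd ℂ) (U 1) * z 1) • U + wed U z • perp U := by
  have h : ((‖U‖ ^ 2 : ℝ) : ℂ) = U 0 * (starRingEnd ℂ) (U 0) + U 1 * (starRingEnd ℂ) (U 1) := by
    rw [norm_sq_two, Complex.mul_conj, Complex.mul_conj, Complex.normSq_eq_norm_sq,
      Complex.normSq_eq_norm_sq]
    push_cast; ring
  rw [h]
  ext i
  fin_cases i
  · simp [perp, wed]; ring
  · simp [perp, wed]; ring

lemma inner_two_le (U z : EuclideanSpace ℂ (Fin 2)) :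
    ‖(starRingEnd ℂ) (U 0) * z 0 + (starRingEnd ℂ) (U 1) * z 1‖ ≤ ‖U‖ * ‖z‖ := by
  have h := wed_le (perp U) z
  rw [norm_perp] at h
  refine le_trans (le_of_eq ?_) h
  rw [← norm_neg]
  congr 1
  simp [perp, wed]; ring

/-- Key estimate. -/
lemma key_est (A B : Matrix (Fin 2) (Fin 2) ℂ) (hB : B.det = 1)
    (U Y : EuclideanSpace ℂ (Fin 2)) :
    opNorm (A * B) * ‖U‖ ≤
      opNorm B * ‖act A U‖ + opNorm A * ‖Y‖ + opNorm A * opNorm B * ‖U - act B Y‖ := by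
  have hA0 := opNorm_nonneg A
  have hB0 := opNorm_nonneg B
  rcases eq_or_ne U 0 with rfl | hU
  · simp only [norm_zero, mul_zero]; positivity
  have hUpos : 0 < ‖U‖ := norm_pos_iff.mpr hU
  rw [← le_div_iff₀ hUpos]
  apply opNorm_le _ _ (by positivity)
  intro x
  rw [div_mul_eq_mul_div, le_div_iff₀ hUpos, act_mul]
  set z := act B x with hz
  have hzle : ‖z‖ ≤ opNorm B * ‖x‖ := act_norm_le _ _
  have hwed : ‖wed U z‖ ≤ ‖Y‖ * ‖x‖ + ‖U - act B Y‖ * (opNorm B * ‖x‖) := by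
    have e : wed U z = wed Y x + wed (U - act B Y) z := by
      have h1 := wed_act B Y x
      rw [hB, one_mul, ← hz] at h1
      rw [← h1]
      simp [wed]; ring
    rw [e]
    refine (norm_add_le _ _).trans (add_le_add (wed_le _ _) ((wed_le _ _).trans ?_))
    gcongr
  have h2 := congrArg (act A) (decomp U z)
  rw [act_add, act_smul, act_smul, act_smul] at h2
  have h3 := congrArg norm h2
  rw [norm_smul, Complex.norm_real, Real.norm_of_nonneg (by positivity)] at h3
  have h4 : ‖U‖ ^ 2 * ‖act A z‖ ≤ (‖U‖ * ‖z‖) * ‖act A U‖ + ‖wed U z‖ * (opNorm A * ‖U‖) := by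
    rw [h3]
    refine (norm_add_le _ _).trans ?_
    rw [norm_smul, norm_smul]
    have := act_norm_le A (perp U)
    rw [norm_perp] at this
    have := inner_two_le U z
    gcongr
  have h5 : ‖act A z‖ * ‖U‖ ≤ ‖z‖ * ‖act A U‖ + ‖wed U z‖ * opNorm A := by
    apply le_of_mul_le_mul_left _ hUpos
    linarith
  refine h5.trans ?_
  calc ‖z‖ * ‖act A U‖ + ‖wed U z‖ * opNorm A
      ≤ (opNorm B * ‖x‖) * ‖act A U‖ +
        (‖Y‖ * ‖x‖ + ‖U - act B Y‖ * (opNorm B * ‖x‖)) * opNorm A := by gcongr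
    _ = _ := by ring

lemma one_le_opNorm (A : Matrix (Fin 2) (Fin 2) ℂ) (hA : A.det = 1) : 1 ≤ opNorm A := by
  have h := wed_act A !₂[1, 0] !₂[0, 1]
  have h1 := wed_le (act A !₂[1, 0]) (act A !₂[0, 1])
  have n1 : ‖(!₂[1, 0] : EuclideanSpace ℂ (Fin 2))‖ = 1 := by
    rw [← sq_eq_sq₀ (norm_nonneg _) (by norm_num), norm_sq_two]; simp
  have n2 : ‖(!₂[0, 1] : EuclideanSpace ℂ (Fin 2))‖ = 1 := by
    rw [← sq_eq_sq₀ (norm_nonneg _) (by norm_num), norm_sq_two]; simp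
  have h2 := act_norm_le A !₂[1, 0]
  have h3 := act_norm_le A !₂[0, 1]
  rw [n1, mul_one] at h2
  rw [n2, mul_one] at h3
  rw [h, hA] at h1
  have h4 : wed !₂[1, 0] !₂[0, 1] = 1 := by simp [wed]
  rw [h4] at h1
  simp only [mul_one, norm_one] at h1
  have h5 := mul_le_mul h2 h3 (norm_nonneg _) (opNorm_nonneg A)
  nlinarith [opNorm_nonneg A]

/-! ### Transfer matrices -/

lemma transferT_det (lam : ℝ) (E : ℂ) (a : ℝ) : (transferT lam E a).det = 1 := by
  simp [transferT, Matrix.det_fin_two]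

lemma transferM_det (lam : ℝ) (E : ℂ) (w : List ℝ) : (transferM lam E w).det = 1 := by
  induction w with
  | nil => simp [transferM]
  | cons a w ih => rw [transferM, Matrix.det_mul, ih, transferT_det, one_mul]

lemma transferM_append (lam : ℝ) (E : ℂ) (w w' : List ℝ) :
    transferM lam E (w ++ w') = transferM lam E w' * transferM lam E w := by
  induction w with
  | nil => simp [transferM]
  | cons a w ih => rw [List.cons_append, transferM, transferM, ih, mul_assoc]

lemma sturmian_shift (α x : ℝ) (m n : ℤ) : sturmian α (x + m * α) n = sturmian α x (m + n) := by
  unfold sturmian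
  have : (n : ℝ) * α + (x + m * α) = ((m + n : ℤ) : ℝ) * α + x := by push_cast; ring
  rw [this]

lemma sturmianWord_add (α x : ℝ) (m n : ℕ) :
    sturmianWord α x (m + n) = sturmianWord α x m ++ sturmianWord α (x + m * α) n := by
  rw [sturmianWord_eq, sturmianWord_eq, sturmianWord_eq, List.range_add, List.map_append, List.map_map]
  congr 1
  apply List.map_congr_left
  intro k _
  have := sturmian_shift α x m (k + 1)
  simp only [Int.cast_natCast] at this
  rw [this]
  simp [add_assoc]

lemma sturmian_cases (α x : ℝ) (n : ℤ) : sturmian α x n = 0 ∨ sturmian α x n = 1 := by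
  unfold sturmian
  split_ifs <;> simp

/-- Uniform bound on the one-step matrices. -/
def tb (lam : ℝ) (E : ℂ) : ℝ := opNorm (transferT lam E 0) + opNorm (transferT lam E 1)

lemma tb_ge (lam : ℝ) (E : ℂ) (α x : ℝ) (n : ℤ) :
    opNorm (transferT lam E (sturmian α x n)) ≤ tb lam E := by
  unfold tb
  have h0 := opNorm_nonneg (transferT lam E 0)
  have h1 := opNorm_nonneg (transferT lam E 1)
  rcases sturmian_cases α x n with h | h <;> rw [h] <;> linarith

lemma one_le_tb (lam : ℝ) (E : ℂ) : 1 ≤ tb lam E := by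
  unfold tb
  have h0 := one_le_opNorm _ (transferT_det lam E 0)
  have h1 := opNorm_nonneg (transferT lam E 1)
  linarith

/-- Log of the norm of the cocycle. -/
def Phi (lam : ℝ) (E : ℂ) (α x : ℝ) (n : ℕ) : ℝ :=
  Real.log (opNorm (transferM lam E (sturmianWord α x n)))

lemma opNorm_M_pos (lam : ℝ) (E : ℂ) (w : List ℝ) : 0 < opNorm (transferM lam E w) :=
  lt_of_lt_of_le one_pos (one_le_opNorm _ (transferM_det lam E w))

lemma exp_Phi (lam : ℝ) (E : ℂ) (α x : ℝ) (n : ℕ) :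
    Real.exp (Phi lam E α x n) = opNorm (transferM lam E (sturmianWord α x n)) :=
  Real.exp_log (opNorm_M_pos _ _ _)

lemma Phi_nonneg (lam : ℝ) (E : ℂ) (α x : ℝ) (n : ℕ) : 0 ≤ Phi lam E α x n :=
  Real.log_nonneg (one_le_opNorm _ (transferM_det lam E _))

lemma Phi_add (lam : ℝ) (E : ℂ) (α x : ℝ) (m n : ℕ) :
    Phi lam E α x (m + n) ≤ Phi lam E α x m + Phi lam E α (x + m * α) n := by
  unfold Phi
  rw [sturmianWord_add, transferM_append, add_comm (Real.log _),
    ← Real.log_mul (opNorm_M_pos _ _ _).ne' (opNorm_M_pos _ _ _).ne']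
  exact Real.log_le_log (by rw [← transferM_append]; exact opNorm_M_pos _ _ _) (opNorm_mul_le _ _)

lemma sturmianWord_one (α x : ℝ) : sturmianWord α x 1 = [sturmian α x 1] := by
  simp [sturmianWord_eq]

lemma Phi_le (lam : ℝ) (E : ℂ) (α x : ℝ) (n : ℕ) :
    Phi lam E α x n ≤ n * Real.log (tb lam E) := by
  induction n with
  | zero =>
    rw [Phi, sturmianWord_eq, List.range_zero, List.map_nil, transferM]
    have : opNorm 1 ≤ 1 := opNorm_le _ _ zero_le_one (by intro x; simp [act])
    simpa using Real.log_nonpos (opNorm_nonneg _) this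
  | succ n ih =>
    have h1 := Phi_add lam E α x n 1
    have h2 : Phi lam E α (x + n * α) 1 ≤ Real.log (tb lam E) := by
      unfold Phi
      apply Real.log_le_log (opNorm_M_pos _ _ _)
      rw [sturmianWord_one]
      simpa [transferM] using tb_ge lam E α _ _
    push_cast
    linarith

/-! ### The uniform exponent and the dichotomy -/

/-- The maximal growth at length `n`. -/
def Gmax (lam : ℝ) (E : ℂ) (α : ℝ) (n : ℕ) : ℝ := ⨆ x : ℝ, Phi lam E α x n

lemma Phi_bdd (lam : ℝ) (E : ℂ) (α : ℝ) (n : ℕ) :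
    BddAbove (Set.range fun x : ℝ => Phi lam E α x n) := by
  refine ⟨n * Real.log (tb lam E), ?_⟩
  rintro _ ⟨x, rfl⟩
  exact Phi_le lam E α x n

lemma Phi_le_Gmax (lam : ℝ) (E : ℂ) (α x : ℝ) (n : ℕ) : Phi lam E α x n ≤ Gmax lam E α n :=
  le_ciSup (Phi_bdd lam E α n) x

lemma Gmax_nonneg (lam : ℝ) (E : ℂ) (α : ℝ) (n : ℕ) : 0 ≤ Gmax lam E α n :=
  (Phi_nonneg lam E α 0 n).trans (Phi_le_Gmax lam E α 0 n)

lemma Gmax_subadditive (lam : ℝ) (E : ℂ) (α : ℝ) : Subadditive (Gmax lam E α) := by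
  intro m n
  apply ciSup_le
  intro x
  exact (Phi_add lam E α x m n).trans (add_le_add (Phi_le_Gmax _ _ _ _ _) (Phi_le_Gmax _ _ _ _ _))

lemma dichotomy (lam : ℝ) (E : ℂ) (α : ℝ) (hirr : Irrational α) (hα : α ∈ Set.Ioo (0 : ℝ) 1) :
    Filter.Tendsto (fun n : ℕ => Gmax lam E α n / n) Filter.atTop (nhds 0) ∨
    ∃ N1 N2 : ℕ, ∀ x : ℝ, Phi lam E α x N1 + Real.log 4 ≤ Phi lam E α x (N1 + N2) ∧
      Phi lam E α (x + N1 * α) N2 + Real.log 4 ≤ Phi lam E α x (N1 + N2) := by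
  have hsub := Gmax_subadditive lam E α
  have hbdd : BddBelow (Set.range fun n : ℕ => Gmax lam E α n / n) := by
    refine ⟨0, ?_⟩
    rintro _ ⟨n, rfl⟩
    exact div_nonneg (Gmax_nonneg _ _ _ _) (Nat.cast_nonneg n)
  have hlim := hsub.tendsto_lim hbdd
  have hle : ∀ n : ℕ, n ≠ 0 → hsub.lim ≤ Gmax lam E α n / n := fun n hn => hsub.lim_le_div hbdd hn
  set γ := hsub.lim with hγ
  have hγ0 : 0 ≤ γ := ge_of_tendsto' hlim
    (fun n => div_nonneg (Gmax_nonneg _ _ _ _) (Nat.cast_nonneg n))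
  rcases hγ0.eq_or_lt with h0 | hpos
  · left; rw [h0]; exact hlim
  right
  have hev := hlim.eventually (gt_mem_nhds (show γ < γ + γ / 100 by linarith))
  obtain ⟨n0, hn0⟩ := Filter.eventually_atTop.mp hev
  set C0 : ℝ := n0 * Real.log (tb lam E) with hC0
  have hlogtb : 0 ≤ Real.log (tb lam E) := Real.log_nonneg (one_le_tb lam E)
  have hC0' : 0 ≤ C0 := by positivity
  have hup : ∀ (x : ℝ) (n : ℕ), Phi lam E α x n ≤ (γ + γ / 100) * n + C0 := by
    intro x n
    rcases lt_or_ge n n0 with h | h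
    · have h1 := Phi_le lam E α x n
      have h2 : (n : ℝ) * Real.log (tb lam E) ≤ C0 := by
        rw [hC0]; gcongr
      have : 0 ≤ (γ + γ / 100) * n := by positivity
      linarith
    · rcases Nat.eq_zero_or_pos n with h3 | h3
      · subst h3
        have := Phi_le lam E α x 0
        simp only [Nat.cast_zero, zero_mul, mul_zero] at this ⊢
        linarith
      · have h1 := hn0 n h
        have hn : (0 : ℝ) < n := by exact_mod_cast h3
        rw [div_lt_iff₀ hn] at h1
        linarith [Phi_le_Gmax lam E α x n]
  obtain ⟨m, hm⟩ := exists_nat_gt ((3 * C0 + Real.log 4 + γ) / (0.4 * γ))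
  rw [div_lt_iff₀ (by positivity)] at hm
  obtain ⟨q, q', p, p', hmq, hq'1, hq'q, hlt, hle1, hpos', hmin, hsgn⟩ :=
    exists_good_scale α hirr m
  have hlow : ∀ x : ℝ, 3 * q * γ - (γ + γ / 100) * (3 * q - (q - 1 : ℕ)) - 2 * C0 ≤
      Phi lam E α x (q - 1) := by
    intro x
    have h3 : Gmax lam E α (3 * q) ≤
        (γ + γ / 100) * (3 * q - (q - 1 : ℕ)) + 2 * C0 + Phi lam E α x (q - 1) := by
      apply ciSup_le
      intro y
      obtain ⟨j, hj, hw⟩ := recurrence α hα q q' p p' hq'q hlt hle1 hpos' hmin hsgn x y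
      obtain ⟨r, hr⟩ : ∃ r, 3 * q = j + ((q - 1) + r) := ⟨3 * q - j - (q - 1), by omega⟩
      have hr' : (3 * q : ℝ) = j + ((q - 1 : ℕ) + r) := by exact_mod_cast hr
      rw [hr, hr']
      have h1 := Phi_add lam E α y j ((q - 1) + r)
      have h2 := Phi_add lam E α (y + j * α) (q - 1) r
      have h4 : Phi lam E α (y + j * α) (q - 1) = Phi lam E α x (q - 1) := by
        unfold Phi; rw [hw]
      have h5 := hup y j
      have h6 := hup (y + j * α + (q - 1 : ℕ) * α) r
      rw [h4] at h2
      linarith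
    have h4 := hle (3 * q) (by omega)
    rw [le_div_iff₀ (by
      have : 0 < 3 * q := by omega
      exact_mod_cast this)] at h4
    push_cast at h4
    linarith
  have hq1 : ((q - 1 : ℕ) : ℝ) = q - 1 := by
    rw [Nat.cast_sub (by omega)]; simp
  have hmq' : (m : ℝ) < q := by exact_mod_cast hmq
  have hmq2 : m * (0.4 * γ) ≤ q * (0.4 * γ) := by gcongr
  have hsplit : (q - 1) / 2 + ((q - 1) - (q - 1) / 2) = q - 1 := by omega
  have hhalf : ∀ (k : ℕ), 2 * k ≤ q → ∀ x y, 
      Phi lam E α y k + Real.log 4 ≤ Phi lam E α x (q - 1) := by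
    intro k hk x y
    have h1 := hup y k
    have h2 := hlow x
    have hk' : (2 * k : ℝ) ≤ q := by exact_mod_cast hk
    rw [hq1] at h2
    have h3 : (γ + γ / 100) * k ≤ (γ + γ / 100) * (q / 2) := by
      apply mul_le_mul_of_nonneg_left <;> linarith
    nlinarith
  refine ⟨(q - 1) / 2, (q - 1) - (q - 1) / 2, fun x => ?_⟩
  rw [hsplit]
  exact ⟨hhalf _ (by omega) _ _, hhalf _ (by omega) _ _⟩

/-! ### The square-summable estimate -/

/-- The inhomogeneity `(H - E) u`. -/
def inhom (lam : ℝ) (E : ℂ) (α θ : ℝ) (u : ℤ → ℂ) (n : ℤ) : ℂ :=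
  u (n + 1) + u (n - 1) + (lam * sturmian α θ n : ℝ) * u n - E * u n

/-- The phase-space vector. -/
def vecU (u : ℤ → ℂ) (n : ℤ) : EuclideanSpace ℂ (Fin 2) := !₂[u (n + 1), u n]

lemma vecU_step (lam : ℝ) (E : ℂ) (α θ : ℝ) (u : ℤ → ℂ) (n : ℤ) :
    vecU u (n + 1) = act (transferT lam E (sturmian α θ (n + 1))) (vecU u n) +
      !₂[inhom lam E α θ u (n + 1), 0] := by
  ext i
  fin_cases i
  · simp [act_zero_coord, vecU, transferT, inhom]; ring
  · simp [act_one_coord, vecU, transferT]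

lemma vecU_err (lam : ℝ) (E : ℂ) (α θ : ℝ) (u : ℤ → ℂ) (k : ℤ) (N : ℕ) :
    ‖vecU u (k + N) - act (transferM lam E (sturmianWord α (θ + k * α) N)) (vecU u k)‖ ≤
      tb lam E ^ N * ∑ j ∈ Finset.range N, ‖inhom lam E α θ u (k + 1 + j)‖ := by
  have htb := one_le_tb lam E
  induction N with
  | zero =>
    rw [sturmianWord_eq, List.range_zero, List.map_nil, transferM]
    simp [act]
  | succ N ih =>
    rw [sturmianWord_add, transferM_append, act_mul, sturmianWord_one]
    have e0 : (θ + k * α + N * α) = θ + ((k + N : ℤ) : ℝ) * α := by push_cast; ring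
    rw [e0, sturmian_shift]
    have e1 : k + ((N + 1 : ℕ) : ℤ) = k + N + 1 := by push_cast; ring
    rw [e1, vecU_step lam E α θ]
    have e2 : transferM lam E [sturmian α θ (k + N + 1)] =
      transferT lam E (sturmian α θ (k + N + 1)) := by simp [transferM]
    rw [e2, add_sub_right_comm, ← act_sub]
    refine (norm_add_le _ _).trans ?_
    have hf : ‖(!₂[inhom lam E α θ u (k + N + 1), 0] : EuclideanSpace ℂ (Fin 2))‖ =
        ‖inhom lam E α θ u (k + 1 + N)‖ := by
      rw [← sq_eq_sq₀ (norm_nonneg _) (norm_nonneg _), norm_sq_two]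
      simp [add_right_comm]
    rw [hf, Finset.sum_range_succ, mul_add, pow_succ']
    apply add_le_add
    · refine (act_norm_le _ _).trans ?_
      rw [mul_assoc]
      exact mul_le_mul (tb_ge _ _ _ _ _) ih (norm_nonneg _) (by linarith)
    · rw [← pow_succ']
      exact le_mul_of_one_le_left (norm_nonneg _) (one_le_pow₀ htb)

lemma hasSum_shift {a : ℤ → ℝ} {S : ℝ} (h : HasSum a S) (c : ℤ) :
    HasSum (fun k => a (k + c)) S :=
  (Equiv.addRight c).hasSum_iff.mpr h

/-- The a priori estimate. -/
lemma l2_estimate (lam : ℝ) (E : ℂ) (α θ : ℝ) (N1 N2 : ℕ)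
    (hN : ∀ x : ℝ, Phi lam E α x N1 + Real.log 4 ≤ Phi lam E α x (N1 + N2) ∧
      Phi lam E α (x + N1 * α) N2 + Real.log 4 ≤ Phi lam E α x (N1 + N2)) :
    ∃ K : ℝ, 0 ≤ K ∧ ∀ (u : ℤ → ℂ) (S F : ℝ), HasSum (fun n => ‖u n‖ ^ 2) S →
      HasSum (fun n => ‖inhom lam E α θ u n‖ ^ 2) F → S ≤ K * F := by
  have htb := one_le_tb lam E
  set t := tb lam E with ht
  set D : ℝ := t ^ N1 + t ^ N2 + t ^ N1 * t ^ N1 with hD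
  have hD0 : 0 ≤ D := by positivity
  refine ⟨4 * (D ^ 2 * N2 * N2) + 4 * (D ^ 2 * N1 * N1), by positivity, ?_⟩
  intro u S F hS hF
  set f : ℤ → ℝ := fun n => ‖inhom lam E α θ u n‖ with hf
  set g : ℤ → ℝ := fun k => ‖vecU u k‖ with hg
  set h2 : ℤ → ℝ := fun k => ∑ j ∈ Finset.range N2, f (k + 1 + j) with hh2
  set h1 : ℤ → ℝ := fun k => ∑ j ∈ Finset.range N1, f (k - N1 + 1 + j) with hh1
  have hgS : HasSum (fun k => g k ^ 2) (S + S) := by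
    have : (fun k => g k ^ 2) = fun k => ‖u (k + 1)‖ ^ 2 + ‖u k‖ ^ 2 := by
      ext k
      simp only [hg]
      rw [norm_sq_two]
      simp [vecU]
    rw [this]
    exact (hasSum_shift hS 1).add hS
  have hmain : ∀ k, g k ≤ 1 / 4 * g (k + N2) + 1 / 4 * g (k + (-N1)) + D * h2 k + D * h1 k := by
    intro k
    set x : ℝ := θ + ((k - N1 : ℤ) : ℝ) * α with hx
    have hx' : x + N1 * α = θ + k * α := by rw [hx]; push_cast; ring
    set B := transferM lam E (sturmianWord α x N1) with hB
    set A := transferM lam E (sturmianWord α (θ + k * α) N2) with hA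
    have hAB : A * B = transferM lam E (sturmianWord α x (N1 + N2)) := by
      rw [sturmianWord_add, transferM_append, hx']
    have hBP : opNorm B * 4 ≤ opNorm (A * B) := by
      have := Real.exp_le_exp.mpr (hN x).1
      rw [Real.exp_add, Real.exp_log (by norm_num), exp_Phi, exp_Phi] at this
      rwa [hAB]
    have hAP : opNorm A * 4 ≤ opNorm (A * B) := by
      have := Real.exp_le_exp.mpr (hN x).2
      rw [hx', Real.exp_add, Real.exp_log (by norm_num), exp_Phi, exp_Phi] at this
      rwa [hAB]
    have hBt : opNorm B ≤ t ^ N1 := by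
      have := Real.exp_le_exp.mpr (Phi_le lam E α x N1)
      rwa [exp_Phi, Real.exp_nat_mul, Real.exp_log (by linarith)] at this
    have hPpos : 0 < opNorm (A * B) := by rw [hAB]; exact opNorm_M_pos _ _ _
    have hkey := key_est A B (transferM_det _ _ _) (vecU u k) (vecU u (k - N1))
    have e2 := vecU_err lam E α θ u k N2
    have e1 := vecU_err lam E α θ u (k - N1) N1
    rw [sub_add_cancel] at e1
    have e1' : ‖vecU u k - act B (vecU u (k - N1))‖ ≤ t ^ N1 * h1 k := e1
    have e2' : ‖act A (vecU u k)‖ ≤ g (k + N2) + t ^ N2 * h2 k := by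
      have : act A (vecU u k) = vecU u (k + N2) - (vecU u (k + N2) - act A (vecU u k)) := by abel
      rw [this]
      refine (norm_sub_le _ _).trans (add_le_add le_rfl e2)
    have hh10 : 0 ≤ h1 k := Finset.sum_nonneg fun _ _ => norm_nonneg _
    have hh20 : 0 ≤ h2 k := Finset.sum_nonneg fun _ _ => norm_nonneg _
    have hg1 : 0 ≤ g (k + (-N1)) := norm_nonneg _
    have hg2 : 0 ≤ g (k + N2) := norm_nonneg _
    have hgk : ‖vecU u (k - N1)‖ = g (k + (-N1)) := by rw [← sub_eq_add_neg]
    rw [hgk] at hkey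
    set P := opNorm (A * B) with hP
    have hA0 := opNorm_nonneg A
    have hB0 := opNorm_nonneg B
    have s1 : opNorm B * ‖act A (vecU u k)‖ ≤ P / 4 * (g (k + N2) + t ^ N2 * h2 k) := by
      apply mul_le_mul (by linarith) e2' (norm_nonneg _) (by positivity)
    have s2 : opNorm A * g (k + (-N1)) ≤ P / 4 * g (k + (-N1)) :=
      mul_le_mul_of_nonneg_right (by linarith) hg1
    have s3 : opNorm A * opNorm B * ‖vecU u k - act B (vecU u (k - N1))‖ ≤
        P / 4 * t ^ N1 * (t ^ N1 * h1 k) := by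
      apply mul_le_mul _ e1' (norm_nonneg _) (by positivity)
      apply mul_le_mul (by linarith) hBt hB0 (by positivity)
    have s4 : P * g k ≤ P * (1 / 4 * g (k + N2) + 1 / 4 * g (k + (-N1)) +
        (1 / 4 * t ^ N2) * h2 k + (1 / 4 * (t ^ N1 * t ^ N1)) * h1 k) := by
      have : P * g k ≤ _ := hkey
      linarith
    refine (le_of_mul_le_mul_left s4 hPpos).trans ?_
    have p1 : 0 ≤ t ^ N1 := by positivity
    have p2 : 0 ≤ t ^ N2 := by positivity
    have p3 : 0 ≤ t ^ N1 * t ^ N1 := by positivity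
    have q1 : 1 / 4 * t ^ N2 * h2 k ≤ D * h2 k := mul_le_mul_of_nonneg_right (by linarith) hh20
    have q2 : 1 / 4 * (t ^ N1 * t ^ N1) * h1 k ≤ D * h1 k :=
      mul_le_mul_of_nonneg_right (by linarith) hh10
    linarith
  have hcs : ∀ (N : ℕ) (c : ℤ) (k : ℤ), (∑ j ∈ Finset.range N, f (k + c + j)) ^ 2 ≤
      N * ∑ j ∈ Finset.range N, f (k + (c + j)) ^ 2 := by
    intro N c k
    have := sq_sum_le_card_mul_sum_sq (s := Finset.range N) (f := fun j : ℕ => f (k + c + j))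
    simpa [add_assoc] using this
  have hsumf : ∀ (N : ℕ) (c : ℤ), HasSum (fun k : ℤ => ∑ j ∈ Finset.range N, f (k + (c + j)) ^ 2)
      (N * F) := by
    intro N c
    have := hasSum_sum (s := Finset.range N) (f := fun (j : ℕ) (k : ℤ) => f (k + (c + j)) ^ 2)
      (a := fun _ => F) (fun j _ => hasSum_shift hF (c + j))
    simpa using this
  have hpt : ∀ k, g k ^ 2 ≤ 1 / 4 * g (k + N2) ^ 2 + 1 / 4 * g (k + (-N1)) ^ 2 +
      4 * D ^ 2 * N2 * (∑ j ∈ Finset.range N2, f (k + (1 + j)) ^ 2) +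
      4 * D ^ 2 * N1 * (∑ j ∈ Finset.range N1, f (k + ((-N1 + 1) + j)) ^ 2) := by
    intro k
    have m1 := hmain k
    have m2 : h2 k ^ 2 ≤ _ := hcs N2 1 k
    have m3 : h1 k ^ 2 ≤
        N1 * ∑ j ∈ Finset.range N1, f (k + ((-N1 + 1) + j)) ^ 2 := by
      have := hcs N1 (-N1 + 1) k
      have e : ∀ j : ℕ, k + (-(N1 : ℤ) + 1) + j = k - N1 + 1 + j := by intro j; ring
      simp only [e] at this
      exact this
    have hgk : 0 ≤ g k := norm_nonneg _
    have m4 : g k ^ 2 ≤ (1 / 4 * g (k + N2) + 1 / 4 * g (k + (-N1)) + D * h2 k + D * h1 k) ^ 2 :=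
      pow_le_pow_left₀ hgk m1 2
    have m5 : ∀ a b c d : ℝ, (a + b + c + d) ^ 2 ≤ 4 * (a ^ 2 + b ^ 2 + c ^ 2 + d ^ 2) := by
      intro a b c d
      nlinarith [sq_nonneg (a - b), sq_nonneg (a - c), sq_nonneg (a - d), sq_nonneg (b - c),
        sq_nonneg (b - d), sq_nonneg (c - d)]
    have m6 := m4.trans (m5 _ _ _ _)
    have m7 := mul_le_mul_of_nonneg_left m2 (show 0 ≤ 4 * D ^ 2 by positivity)
    have m8 := mul_le_mul_of_nonneg_left m3 (show 0 ≤ 4 * D ^ 2 by positivity)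
    linarith
  have hR := (((hasSum_shift hgS N2).mul_left (1 / 4)).add
    ((hasSum_shift hgS (-N1)).mul_left (1 / 4))).add ((hsumf N2 1).mul_left (4 * D ^ 2 * N2)) |>.add
    ((hsumf N1 (-N1 + 1)).mul_left (4 * D ^ 2 * N1))
  have := hasSum_le hpt hgS hR
  linarith

/-! ### Operator theory -/

lemma lp_hasSum_sq (u : lp (fun _ : ℤ => ℂ) 2) : HasSum (fun n => ‖u n‖ ^ 2) (‖u‖ ^ 2) := by
  have := lp.hasSum_norm (p := 2) (by norm_num) u
  simpa using this

lemma H_selfAdjoint (v : ℤ → ℝ) (H : lp (fun _ : ℤ => ℂ) 2 →L[ℂ] lp (fun _ : ℤ => ℂ) 2)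
    (hH : (∀ u : lp (fun _ : ℤ => ℂ) 2, ∀ n : ℤ,
      H u n = u (n + 1) + u (n - 1) + (v n : ℂ) * u n)) : IsSelfAdjoint H := by
  rw [ContinuousLinearMap.isSelfAdjoint_iff_isSymmetric]
  intro x y
  have key : ∀ x y : lp (fun _ : ℤ => ℂ) 2, ∀ n : ℤ, Summable fun k : ℤ =>
      y (k + n) * (starRingEnd ℂ) (x k) := by
    intro x y n
    have s1 := (hasSum_shift (lp_hasSum_sq y) n).summable
    have s2 := (lp_hasSum_sq x).summable
    refine Summable.of_norm_bounded (s1.add s2) ?_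
    intro k
    rw [norm_mul, RCLike.norm_conj]
    nlinarith [sq_nonneg (‖y (k + n)‖ - ‖x k‖), sq_nonneg (‖y (k + n)‖ + ‖x k‖)]
  obtain ⟨s1, a1⟩ := key x y 1
  obtain ⟨s2, a2⟩ := key x y (-1)
  have hl := lp.hasSum_inner (𝕜 := ℂ) (H x) y
  have hr := lp.hasSum_inner (𝕜 := ℂ) x (H y)
  -- ⟪x, Hy⟫ - a1 - a2 has the diagonal sum
  have b1 : HasSum (fun k : ℤ => y k * (starRingEnd ℂ) (x (k - 1))) s1 := by
    have := ((Equiv.addRight (-1 : ℤ)).hasSum_iff).mpr a1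
    simpa [Function.comp_def, sub_eq_add_neg] using this
  have b2 : HasSum (fun k : ℤ => y k * (starRingEnd ℂ) (x (k + 1))) s2 := by
    have := ((Equiv.addRight (1 : ℤ)).hasSum_iff).mpr a2
    simpa [Function.comp_def] using this
  have d1 := (hl.sub b1).sub b2
  have d2 := (hr.sub a1).sub a2
  have e : (fun k : ℤ => inner ℂ (H x k) (y k) - y k * (starRingEnd ℂ) (x (k - 1)) -
      y k * (starRingEnd ℂ) (x (k + 1))) =
      fun k : ℤ => inner ℂ (x k) (H y k) - y (k + 1) * (starRingEnd ℂ) (x k) -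
        y (k + (-1)) * (starRingEnd ℂ) (x k) := by
    ext k
    rw [hH, hH]
    simp only [RCLike.inner_apply, map_add, map_mul, Complex.conj_ofReal, ← sub_eq_add_neg]
    ring
  rw [e] at d1
  have := d1.unique d2
  have h3 : inner ℂ (H x) y = inner ℂ x (H y) := by linear_combination this
  exact h3

lemma not_mem_spectrum_of_bound (H : lp (fun _ : ℤ => ℂ) 2 →L[ℂ] lp (fun _ : ℤ => ℂ) 2)
    (hsa : IsSelfAdjoint H) (E : ℂ) (K : ℝ) (hK : 0 ≤ K)
    (hb : ∀ u : lp (fun _ : ℤ => ℂ) 2, ‖u‖ ^ 2 ≤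
      K * ‖(H - E • (1 : lp (fun _ : ℤ => ℂ) 2 →L[ℂ] lp (fun _ : ℤ => ℂ) 2)) u‖ ^ 2) :
    E ∉ spectrum ℂ H := by
  set T := H - E • (1 : lp (fun _ : ℤ => ℂ) 2 →L[ℂ] lp (fun _ : ℤ => ℂ) 2) with hT
  have hstar : star T = H - (starRingEnd ℂ E) • (1 : lp (fun _ : ℤ => ℂ) 2 →L[ℂ] _) := by
    rw [hT, star_sub, star_smul, star_one, hsa.star_eq]; rfl
  have hcomm : Commute (star T) T := by
    rw [hstar, hT]
    refine Commute.sub_left (Commute.sub_right (Commute.refl _) ?_) (Commute.sub_right ?_ ?_)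
    · exact (Commute.one_right _).smul_right _
    · exact (Commute.one_left _).smul_left _
    · exact ((Commute.one_left _).smul_left _)
  have hunit : IsUnit (star T * T) := by
    apply ContinuousLinearMap.isUnit_of_forall_le_norm_inner_map (𝕜 := ℂ) _
      (c := ⟨1 / (K + 1), by positivity⟩)
    · show (0 : ℝ) < 1 / (K + 1)
      positivity
    · intro x
      have : inner ℂ ((star T * T) x) x = ((‖T x‖ ^ 2 : ℝ) : ℂ) := by
        rw [ContinuousLinearMap.star_eq_adjoint, mul_apply_eq_comp,
          ContinuousLinearMap.adjoint_inner_left, inner_self_eq_norm_sq_to_K]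
        push_cast; rfl
      rw [this, Complex.norm_real, Real.norm_of_nonneg (by positivity)]
      show ‖x‖ ^ 2 * (1 / (K + 1)) ≤ _
      rw [mul_one_div, div_le_iff₀ (by positivity)]
      nlinarith [hb x, sq_nonneg ‖T x‖]
  have hTu : IsUnit T := (hcomm.isUnit_mul_iff.mp hunit).2
  rw [spectrum.notMem_iff]
  have : (algebraMap ℂ (lp (fun _ : ℤ => ℂ) 2 →L[ℂ] lp (fun _ : ℤ => ℂ) 2)) E - H = -T := by
    rw [hT, Algebra.algebraMap_eq_smul_one, neg_sub]
  rw [this]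
  exact hTu.neg

end

theorem lyapunov_exponent_zero_on_spectrum
    (lam : ℝ) (hlam : lam ≠ 0) (α : ℝ) (hirr : Irrational α) (hα : α ∈ Set.Ioo (0 : ℝ) 1)
    (θ θ' : ℝ) (hθ : θ ∈ Set.Ico (0 : ℝ) 1) (hθ' : θ' ∈ Set.Ico (0 : ℝ) 1)
    (H : lp (fun _ : ℤ => ℂ) 2 →L[ℂ] lp (fun _ : ℤ => ℂ) 2)
    (hH : (∀ u : lp (fun _ : ℤ => ℂ) 2, ∀ n : ℤ,
      H u n = u (n + 1) + u (n - 1) + (lam * sturmian α θ' n : ℝ) * u n))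
    (E : ℂ) (hE : E ∈ spectrum ℂ H) :
    Filter.Tendsto
      (fun n : ℕ => (1 / n : ℝ) * Real.log (opNorm (transferM lam E (sturmianWord α θ n))))
      Filter.atTop (nhds 0) := by
  rcases dichotomy lam E α hirr hα with h | ⟨N1, N2, hN⟩
  · refine squeeze_zero (fun n => ?_) (fun n => ?_) h
    · exact mul_nonneg (by positivity) (Phi_nonneg lam E α θ n)
    · rw [one_div, inv_mul_eq_div]
      exact div_le_div_of_nonneg_right (Phi_le_Gmax lam E α θ n) (Nat.cast_nonneg n)
  · exfalso
    obtain ⟨K, hK, hest⟩ := l2_estimate lam E α θ' N1 N2 hN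
    refine not_mem_spectrum_of_bound H (H_selfAdjoint _ H hH) E K hK ?_ hE
    intro u
    refine hest (fun n => u n) _ _ (lp_hasSum_sq u) ?_
    refine (lp_hasSum_sq _).congr_fun ?_
    intro n
    congr 2
    have h1 : ((H - E • (1 : lp (fun _ : ℤ => ℂ) 2 →L[ℂ] lp (fun _ : ℤ => ℂ) 2)) u) n =
        H u n - E * u n := rfl
    rw [h1, hH]
    rfl
end

section
/- Let α ∈ (0,1) be an irrational bounded density number and let λ ∈ ℝ \ {0}. Then there exist constants C > 0 and μ > 0 such that for all θ, θ' ∈ [0,1), every E in the spectrum of H_{λ,α,θ'}, and every n ∈ ℕ, one has ‖M(λ,E,v_{α,θ}^n)‖ ≤ C·n^μ. -/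
open scoped Classical

namespace SturmAux

abbrev Mat := Matrix (Fin 2) (Fin 2) ℂ

lemma opNorm_nonneg (A : Mat) : 0 ≤ opNorm A := norm_nonneg _

lemma opNorm_mul_le (A B : Mat) : opNorm (A * B) ≤ opNorm A * opNorm B := by
  unfold opNorm; rw [map_mul]; exact norm_mul_le _ _

lemma opNorm_add_le (A B : Mat) : opNorm (A + B) ≤ opNorm A + opNorm B := by
  unfold opNorm; rw [map_add]; exact norm_add_le _ _

lemma opNorm_sub_le (A B : Mat) : opNorm (A - B) ≤ opNorm A + opNorm B := by
  unfold opNorm; rw [map_sub]; exact norm_sub_le _ _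

lemma opNorm_smul (c : ℂ) (A : Mat) : opNorm (c • A) = ‖c‖ * opNorm A := by
  unfold opNorm; rw [map_smul]; exact norm_smul _ _

lemma opNorm_one : opNorm (1 : Mat) ≤ 1 := by
  unfold opNorm; rw [map_one]; exact ContinuousLinearMap.norm_id_le

lemma norm_entry_le (A : Mat) (i j : Fin 2) : ‖A i j‖ ≤ opNorm A := by
  have h := (Matrix.toEuclideanCLM (𝕜 := ℂ) A).le_opNorm (EuclideanSpace.single j 1)
  have h2 := EuclideanSpace.norm_eq ((Matrix.toEuclideanCLM (𝕜 := ℂ) A) (EuclideanSpace.single j 1))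
  have h3 : ‖((Matrix.toEuclideanCLM (𝕜 := ℂ) A) (EuclideanSpace.single j 1)) i‖ ≤
      ‖(Matrix.toEuclideanCLM (𝕜 := ℂ) A) (EuclideanSpace.single j 1)‖ :=
    PiLp.norm_apply_le _ _
  have h4 : ((Matrix.toEuclideanCLM (𝕜 := ℂ) A) (EuclideanSpace.single j 1)) i = A i j := by
    rw [Matrix.ofLp_toEuclideanCLM]; simp
  rw [h4] at h3
  simp only [PiLp.norm_single, norm_one, mul_one] at h
  exact h3.trans h

lemma opNorm_adj_le (A : Mat) : opNorm (A.adjugate) ≤ 3 * opNorm A := by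
  have h : A.adjugate = A.trace • (1 : Mat) - A := by
    rw [Matrix.adjugate_fin_two]
    ext i j; fin_cases i <;> fin_cases j <;> simp [Matrix.trace_fin_two]
  rw [h]
  refine (opNorm_sub_le _ _).trans ?_
  rw [opNorm_smul]
  have h1 : ‖A.trace‖ ≤ opNorm A + opNorm A := by
    rw [Matrix.trace_fin_two]
    exact (norm_add_le _ _).trans (add_le_add (norm_entry_le _ _ _) (norm_entry_le _ _ _))
  have := mul_le_mul h1 opNorm_one (opNorm_nonneg _) (by linarith [opNorm_nonneg A])
  linarith

/-- If `S = A * X` and `det A = 1` then `X = adj A * S`. -/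
lemma opNorm_cancel_left {A X S : Mat} (hA : A.det = 1) (h : A * X = S) :
    opNorm X ≤ 3 * opNorm A * opNorm S := by
  have : X = A.adjugate * S := by
    rw [← h, ← Matrix.mul_assoc, Matrix.adjugate_mul, hA]; simp
  rw [this]
  exact (opNorm_mul_le _ _).trans
    (mul_le_mul_of_nonneg_right (opNorm_adj_le A) (opNorm_nonneg _))

lemma opNorm_cancel_right {A X S : Mat} (hA : A.det = 1) (h : X * A = S) :
    opNorm X ≤ 3 * opNorm A * opNorm S := by
  have : X = S * A.adjugate := by
    rw [← h, Matrix.mul_assoc, Matrix.mul_adjugate, hA]; simp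
  rw [this]
  refine (opNorm_mul_le _ _).trans ?_
  rw [mul_comm]
  exact mul_le_mul_of_nonneg_right (opNorm_adj_le A) (opNorm_nonneg _)

/-! Cayley-Hamilton facts -/

lemma ch_mul (A X : Mat) (hA : A.det = 1) : A * (A * X) = A.trace • (A * X) - X := by
  have h : A * A = A.trace • A - 1 := by
    rw [Matrix.det_fin_two] at hA
    ext i j; fin_cases i <;> fin_cases j <;>
      simp [Matrix.mul_apply, Fin.sum_univ_two, Matrix.trace_fin_two] <;> grind
  rw [← Matrix.mul_assoc, h, Matrix.sub_mul, Matrix.smul_mul, Matrix.one_mul]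

lemma bab (A B X : Mat) (hA : A.det = 1) (hB : B.det = 1) :
    B * (A * (B * X)) = (A * B).trace • (B * X) - A.trace • X + A * X := by
  have h : B * (A * B) = (A * B).trace • B - A.trace • 1 + A := by
    rw [Matrix.det_fin_two] at hA hB
    ext i j; fin_cases i <;> fin_cases j <;>
      simp [Matrix.mul_apply, Fin.sum_univ_two, Matrix.trace_fin_two] <;> grind
  have := congrArg (· * X) h
  simpa [Matrix.mul_assoc, Matrix.add_mul, Matrix.sub_mul] using this

lemma trace_aab (A B : Mat) (hA : A.det = 1) :
    (A * (A * B)).trace = A.trace * (A * B).trace - B.trace := by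
  rw [ch_mul A B hA]; simp

def PhiL (A B X : Mat) (b : ℝ) : Prop :=
  opNorm X ≤ b ∧ opNorm (A * X) ≤ b ∧ opNorm (B * X) ≤ b ∧ opNorm (A * (B * X)) ≤ b ∧
    opNorm (B * (A * X)) ≤ b ∧ opNorm (A * (B * (A * X))) ≤ b

lemma ch_bound (A Y : Mat) (hA : A.det = 1) {K b : ℝ} (hK : ‖A.trace‖ ≤ K)
    (h1 : opNorm (A * Y) ≤ b) (h2 : opNorm Y ≤ b) : opNorm (A * (A * Y)) ≤ (K + 1) * b := by
  rw [ch_mul A Y hA]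
  refine (opNorm_sub_le _ _).trans ?_
  rw [opNorm_smul]
  have := mul_le_mul hK h1 (opNorm_nonneg _) ((norm_nonneg _).trans hK)
  linarith

lemma ch_bound' (A Y Z : Mat) (hA : A.det = 1) {K b : ℝ} (hK : ‖A.trace‖ ≤ K)
    (h1 : opNorm (Z * (A * Y)) ≤ b) (h2 : opNorm (Z * Y) ≤ b) :
    opNorm (Z * (A * (A * Y))) ≤ (K + 1) * b := by
  rw [ch_mul A Y hA, Matrix.mul_sub, Matrix.mul_smul]
  refine (opNorm_sub_le _ _).trans ?_
  rw [opNorm_smul]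
  have := mul_le_mul hK h1 (opNorm_nonneg _) ((norm_nonneg _).trans hK)
  linarith

lemma PhiL.mono {A B X : Mat} {b c : ℝ} (h : PhiL A B X b) (hbc : b ≤ c) : PhiL A B X c := by
  obtain ⟨h1, h2, h3, h4, h5, h6⟩ := h
  exact ⟨h1.trans hbc, h2.trans hbc, h3.trans hbc, h4.trans hbc, h5.trans hbc, h6.trans hbc⟩

lemma PhiL.step1 {A B X : Mat} {b K : ℝ} (hA : A.det = 1) (hK : ‖A.trace‖ ≤ K)
    (h : PhiL A B X b) : PhiL A (A * B) X ((K + 1) ^ 2 * b) := by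
  obtain ⟨h1, h2, h3, h4, h5, h6⟩ := h
  have hb : 0 ≤ b := (opNorm_nonneg _).trans h1
  have hK0 : 0 ≤ K := (norm_nonneg _).trans hK
  have e1 : b ≤ (K + 1) ^ 2 * b := by nlinarith [mul_nonneg hK0 hb, mul_nonneg (mul_nonneg hK0 hK0) hb]
  have e2 : (K + 1) * b ≤ (K + 1) ^ 2 * b := by
    nlinarith [mul_nonneg hK0 hb, mul_nonneg (mul_nonneg hK0 hK0) hb]
  refine ⟨h1.trans e1, h2.trans e1, ?_, ?_, ?_, ?_⟩
  · rw [Matrix.mul_assoc]; exact h4.trans e1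
  · rw [Matrix.mul_assoc]; exact (ch_bound A _ hA hK h4 h3).trans e2
  · rw [Matrix.mul_assoc]; exact h6.trans e1
  · rw [Matrix.mul_assoc]; exact (ch_bound A _ hA hK h6 h5).trans e2

lemma PhiL.step2 {A B X : Mat} {b K : ℝ} (hA : A.det = 1) (hK : ‖A.trace‖ ≤ K)
    (h : PhiL A B X b) : PhiL A (A * B) (A * X) ((K + 1) ^ 2 * b) := by
  obtain ⟨h1, h2, h3, h4, h5, h6⟩ := h
  have hb : 0 ≤ b := (opNorm_nonneg _).trans h1
  have hK0 : 0 ≤ K := (norm_nonneg _).trans hK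
  have e1 : b ≤ (K + 1) ^ 2 * b := by nlinarith [mul_nonneg hK0 hb, mul_nonneg (mul_nonneg hK0 hK0) hb]
  have e2 : (K + 1) * b ≤ (K + 1) ^ 2 * b := by
    nlinarith [mul_nonneg hK0 hb, mul_nonneg (mul_nonneg hK0 hK0) hb]
  have e3 : (K + 1) * ((K + 1) * b) = (K + 1) ^ 2 * b := by ring
  have g1 : opNorm (B * (A * (A * X))) ≤ (K + 1) * b := ch_bound' A X B hA hK h5 h3
  have g2 : opNorm (A * (B * (A * (A * X)))) ≤ (K + 1) * b := by
    have := ch_bound' (b := b) A X (A * B) hA hK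
      (by rw [Matrix.mul_assoc]; exact h6) (by rw [Matrix.mul_assoc]; exact h4)
    rwa [Matrix.mul_assoc] at this
  refine ⟨h2.trans e1, (ch_bound A _ hA hK h2 h1).trans e2, ?_, ?_, ?_, ?_⟩
  · rw [Matrix.mul_assoc]; exact h6.trans e1
  · rw [Matrix.mul_assoc]; exact (ch_bound A _ hA hK h6 h5).trans e2
  · rw [Matrix.mul_assoc]; exact g2.trans e2
  · rw [Matrix.mul_assoc]; exact (ch_bound A _ hA hK g2 g1).trans e3.le

lemma PhiL.switch {A B X : Mat} {b K : ℝ} (hA : A.det = 1) (hB : B.det = 1)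
    (hK : ‖A.trace‖ ≤ K) (hz : ‖(A * B).trace‖ ≤ K)
    (h : PhiL A B X b) : PhiL B A X ((2 * K + 1) * b) := by
  obtain ⟨h1, h2, h3, h4, h5, h6⟩ := h
  have hb : 0 ≤ b := (opNorm_nonneg _).trans h1
  have hK0 : 0 ≤ K := (norm_nonneg _).trans hK
  have e1 : b ≤ (2 * K + 1) * b := by nlinarith [mul_nonneg hK0 hb]
  refine ⟨h1.trans e1, h3.trans e1, h2.trans e1, h5.trans e1, h4.trans e1, ?_⟩
  rw [bab A B X hA hB]
  refine (opNorm_add_le _ _).trans ?_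
  have t := opNorm_sub_le ((A * B).trace • (B * X)) (A.trace • X)
  rw [opNorm_smul, opNorm_smul] at t
  have := mul_le_mul hK h1 (opNorm_nonneg _) hK0
  have := mul_le_mul hz h3 (opNorm_nonneg _) hK0
  linarith

/-- The Fricke-Vogt invariant. -/
def fv (A B : Mat) : ℂ :=
  A.trace ^ 2 + B.trace ^ 2 + (A * B).trace ^ 2 - A.trace * B.trace * (A * B).trace

lemma fv_step (A B : Mat) (hA : A.det = 1) : fv A (A * B) = fv A B := by
  unfold fv; rw [trace_aab A B hA]; ring

lemma fv_comm (A B : Mat) : fv B A = fv A B := by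
  unfold fv; rw [Matrix.trace_mul_comm B A]; ring

lemma fv_aux {x y z : ℂ} {l c : ℝ} (hc : 2 ≤ c) (h : x ^ 2 + y ^ 2 + z ^ 2 - x * y * z = 4 + (l : ℂ) ^ 2)
    (hy : ‖y‖ ≤ c) (hz : ‖z‖ ≤ c) : ‖x‖ ≤ 2 + 2 * c ^ 2 + l ^ 2 := by
  have h1 : x ^ 2 = 4 + (l : ℂ) ^ 2 - y ^ 2 - z ^ 2 + x * (y * z) := by linear_combination h
  have h2 : ‖x‖ ^ 2 ≤ 4 + l ^ 2 + ‖y‖ ^ 2 + ‖z‖ ^ 2 + ‖x‖ * (‖y‖ * ‖z‖) := by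
    rw [← norm_pow, h1]
    refine (norm_add_le _ _).trans ?_
    rw [norm_mul, norm_mul]
    gcongr
    refine (norm_sub_le _ _).trans ?_
    rw [norm_pow]
    gcongr
    refine (norm_sub_le _ _).trans ?_
    rw [norm_pow]
    gcongr
    refine (norm_add_le _ _).trans ?_
    simp
  have h3 : ‖y‖ ^ 2 ≤ c ^ 2 := by gcongr
  have h4 : ‖z‖ ^ 2 ≤ c ^ 2 := by gcongr
  have h5 : ‖y‖ * ‖z‖ ≤ c ^ 2 := by rw [sq]; gcongr
  have h6 : ‖x‖ * (‖y‖ * ‖z‖) ≤ ‖x‖ * c ^ 2 := by gcongr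
  by_contra! hcon
  have hx := norm_nonneg x
  have h8 : ‖x‖ * (‖x‖ - c ^ 2) ≤ 4 + l ^ 2 + 2 * c ^ 2 := by nlinarith
  have h9 : (2 + 2 * c ^ 2 + l ^ 2) * 6 ≤ ‖x‖ * (‖x‖ - c ^ 2) := by
    apply mul_le_mul hcon.le _ (by norm_num) hx
    nlinarith [sq_nonneg l]
  nlinarith [sq_nonneg l, sq_nonneg c]

/-- transfer matrices -/
lemma transferM_append (lam : ℝ) (E : ℂ) (u w : List ℝ) :
    transferM lam E (u ++ w) = transferM lam E w * transferM lam E u := by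
  induction u with
  | nil => simp [transferM]
  | cons a u ih => simp [transferM, ih, Matrix.mul_assoc]

lemma det_transferM (lam : ℝ) (E : ℂ) (w : List ℝ) : (transferM lam E w).det = 1 := by
  induction w with
  | nil => simp [transferM]
  | cons a u ih => simp [transferM, ih, transferT, Matrix.det_fin_two_of]

lemma opNorm_entries (A : Mat) : opNorm A ≤ ‖A 0 0‖ + ‖A 0 1‖ + ‖A 1 0‖ + ‖A 1 1‖ := by
  have key : ∀ i j : Fin 2, opNorm (Matrix.single i j (1 : ℂ)) ≤ 1 := by
    intro i j
    refine ContinuousLinearMap.opNorm_le_bound _ zero_le_one fun x => ?_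
    have hx : ‖x j‖ ≤ ‖x‖ := PiLp.norm_apply_le _ _
    rw [one_mul]
    refine le_trans (le_of_eq ?_) hx
    rw [EuclideanSpace.norm_eq]
    have : ∀ k, ((Matrix.toEuclideanCLM (𝕜 := ℂ) (Matrix.single i j (1 : ℂ))) x) k
        = if k = i then x j else 0 := by
      intro k
      have : ((Matrix.toEuclideanCLM (𝕜 := ℂ) (Matrix.single i j (1 : ℂ))) x) k =
        (Matrix.single i j (1 : ℂ)).mulVec (WithLp.ofLp x) k := by
          rw [Matrix.ofLp_toEuclideanCLM]
      rw [this, Matrix.single_mulVec]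
      simp [Function.update_apply]
    simp only [this]
    rw [Finset.sum_eq_single i]
    · simp
    · intro b _ hb; simp [hb]
    · simp
  have h : A = A 0 0 • Matrix.single 0 0 (1 : ℂ) + A 0 1 • Matrix.single 0 1 (1 : ℂ) +
      A 1 0 • Matrix.single 1 0 (1 : ℂ) + A 1 1 • Matrix.single 1 1 (1 : ℂ) := by
    ext i j; fin_cases i <;> fin_cases j <;> simp [Matrix.single]
  have hs : ∀ (c : ℂ) (i j : Fin 2), opNorm (c • Matrix.single i j (1 : ℂ)) ≤ ‖c‖ := by
    intro c i j
    rw [opNorm_smul]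
    exact mul_le_of_le_one_right (norm_nonneg _) (key i j)
  conv_lhs => rw [h]
  refine (opNorm_add_le _ _).trans (add_le_add ?_ (hs _ _ _))
  refine (opNorm_add_le _ _).trans (add_le_add ?_ (hs _ _ _))
  exact (opNorm_add_le _ _).trans (add_le_add (hs _ _ _) (hs _ _ _))

lemma opNorm_transferM_le (lam : ℝ) (E : ℂ) (w : List ℝ) (hw : ∀ a ∈ w, |a| ≤ 1) {K : ℝ}
    (hK : ‖E‖ + |lam| + 2 ≤ K) : opNorm (transferM lam E w) ≤ K ^ w.length := by
  have hK0 : 0 ≤ K := le_trans (by positivity) hK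
  induction w with
  | nil => simpa [transferM] using opNorm_one
  | cons a u ih =>
    have h1 := ih fun b hb => hw b (by simp [hb])
    have ha := hw a (by simp)
    have h2 : opNorm (transferT lam E a) ≤ K := by
      refine (opNorm_entries _).trans ?_
      have : ‖E - lam * a‖ ≤ ‖E‖ + |lam| := by
        refine (norm_sub_le _ _).trans ?_
        gcongr
        rw [norm_mul]
        simpa using mul_le_of_le_one_right (abs_nonneg lam) ha
      simp [transferT]
      linarith
    rw [transferM, List.length_cons, pow_succ]
    exact (opNorm_mul_le _ _).trans (mul_le_mul h1 h2 (opNorm_nonneg _) (by positivity))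

end SturmAux


namespace SturmAux

noncomputable def val (α x : ℝ) : ℝ := if Int.fract x ∈ Set.Ico (1 - α) 1 then 1 else 0

lemma sturmian_eq_val (α θ : ℝ) (n : ℤ) : sturmian α θ n = val α (n * α + θ) := rfl

lemma val_add_int (α x : ℝ) (r : ℤ) : val α (x + r) = val α x := by
  simp [val]

lemma val_abs_le (α x : ℝ) : |val α x| ≤ 1 := by
  unfold val; split_ifs <;> simp

lemma val_zero {α x : ℝ} (h0 : 0 ≤ x) (h1 : x < 1 - α) (hα : 0 < α) : val α x = 0 := by
  have : Int.fract x = x := Int.fract_eq_self.2 ⟨h0, by linarith⟩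
  have h2 : ¬ (1 - α ≤ x) := not_le.2 h1
  rw [val, this, if_neg]
  exact fun h => h2 h.1

lemma val_one {α x : ℝ} (h0 : 1 - α ≤ x) (h1 : x < 1) (hα : α < 1) : val α x = 1 := by
  have : Int.fract x = x := Int.fract_eq_self.2 ⟨by linarith, by linarith⟩
  simp [val, this, h1]; linarith

noncomputable def W (α x : ℝ) (n : ℕ) : List ℝ :=
  (List.range n).map fun i : ℕ => val α (x + i * α)

@[simp] lemma length_W (α x : ℝ) (n : ℕ) : (W α x n).length = n := by simp [W]

lemma W_add (α x : ℝ) (m n : ℕ) : W α x (m + n) = W α x m ++ W α (x + m * α) n := by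
  simp only [W, List.range_add, List.map_append, List.map_map]
  congr 1
  apply List.map_congr_left
  intro i _
  simp only [Function.comp]
  push_cast; congr 1; ring

lemma W_add_int (α x : ℝ) (r : ℤ) (n : ℕ) : W α (x + r) n = W α x n := by
  unfold W
  apply List.map_congr_left
  intro i _
  rw [← val_add_int α (x + i * α) r]; congr 1; ring

lemma W_one (α x : ℝ) : W α x 1 = [val α x] := by simp [W]

lemma W_mem {α x : ℝ} {n : ℕ} {a : ℝ} (h : a ∈ W α x n) : |a| ≤ 1 := by
  simp only [W, List.mem_map] at h
  obtain ⟨i, _, rfl⟩ := h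
  exact val_abs_le _ _

structure St where
  u : List ℝ
  w : List ℝ
  d : ℝ
  e : ℝ

noncomputable def stepL (s : St) : St := ⟨s.u, s.w ++ s.u, s.d, s.e - s.d⟩
noncomputable def stepR (s : St) : St := ⟨s.u ++ s.w, s.w, s.d - s.e, s.e⟩

noncomputable def step (s : St) : St := if s.d < s.e then stepL s else stepR s

noncomputable def st (α : ℝ) : ℕ → St
  | 0 => ⟨[0], [1], α, 1 - α⟩
  | n + 1 => step (st α n)

structure Inv (α : ℝ) (s : St) : Prop where
  dpos : 0 < s.d
  epos : 0 < s.e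
  dle : s.d ≤ α
  ele : s.e ≤ 1 - α
  upos : 0 < s.u.length
  wpos : 0 < s.w.length
  hd : ∃ r : ℤ, (s.u.length : ℝ) * α - r = s.d
  he : ∃ r : ℤ, (r : ℝ) - s.w.length * α = s.e
  far1 : ∀ m : ℕ, 0 < m → m < s.u.length → ∀ r : ℤ, 0 < (m : ℝ) * α - r → s.d + s.e ≤ (m : ℝ) * α - r
  far2 : ∀ m : ℕ, 0 < m → m < s.w.length → ∀ r : ℤ, 0 < (r : ℝ) - m * α → s.d + s.e ≤ (r : ℝ) - m * α
  wu : ∀ x : ℝ, 0 ≤ x → 1 - α - s.d - s.e ≤ x → x < 1 - α → W α x s.u.length = s.u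
  ww : ∀ x : ℝ, 1 - α ≤ x → x < 1 → x < 1 - α + s.d + s.e → W α x s.w.length = s.w
  cover : ∀ x : ℝ, ∃ i : ℕ, ∃ r : ℤ,
    (1 - α - s.e ≤ x - i * α - r ∧ x - i * α - r < 1 - α ∧ i < s.u.length) ∨
    (1 - α ≤ x - i * α - r ∧ x - i * α - r < 1 - α + s.d ∧ i < s.w.length)

lemma inv_zero {α : ℝ} (h0 : 0 < α) (h1 : α < 1) : Inv α (st α 0) where
  dpos := h0
  epos := by simp [st, h1]
  dle := le_refl _
  ele := le_refl _
  upos := by simp [st]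
  wpos := by simp [st]
  hd := ⟨0, by simp [st]⟩
  he := ⟨1, by simp [st]⟩
  far1 := by intro m hm hm'; simp [st] at hm'; omega
  far2 := by intro m hm hm'; simp [st] at hm'; omega
  wu := by
    intro x hx _ hx'
    simp [st, W_one, val_zero hx hx' h0]
  ww := by
    intro x hx hx' _
    simp [st, W_one, val_one hx hx' h1]
  cover := by
    intro x
    refine ⟨0, ⌊x⌋, ?_⟩
    have := Int.floor_le x
    have := Int.lt_floor_add_one x
    simp only [st, Nat.cast_zero, zero_mul, List.length_singleton]
    rcases lt_or_ge (x - ⌊x⌋) (1 - α) with h | h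
    · left; refine ⟨by linarith, by linarith, by norm_num⟩
    · right; refine ⟨by linarith, by linarith, by norm_num⟩

lemma no_int {x : ℝ} (h0 : 0 < x) (h1 : x < 1) (r : ℤ) : x ≠ r := by
  rintro rfl
  have : 0 < r := by exact_mod_cast h0
  have : r < 1 := by exact_mod_cast h1
  omega

lemma inv_stepL {α : ℝ} (h0 : 0 < α) (h1 : α < 1) {s : St} (h : Inv α s) (hlt : s.d < s.e) :
    Inv α (stepL s) := by
  obtain ⟨u, w, d, e⟩ := s
  obtain ⟨dpos, epos, dle, ele, upos, wpos, ⟨r1, hd⟩, ⟨r2, he⟩, far1, far2, wu, ww, cover⟩ := h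
  simp only at *
  refine ⟨dpos, by simpa [stepL] using hlt, dle, by simp [stepL]; linarith, upos,
    by simp [stepL]; omega, ⟨r1, hd⟩, ⟨r1 + r2, ?_⟩, ?_, ?_, ?_, ?_, ?_⟩
  · simp [stepL]; push_cast; linarith
  · intro m hm hm' r hr
    have := far1 m hm hm' r hr
    simp only [stepL]; linarith
  · intro m hm hm' r hr
    simp only [stepL, List.length_append] at hm' ⊢
    rcases lt_trichotomy m w.length with hc | hc | hc
    · have := far2 m hm hc r hr; linarith
    · subst hc
      by_contra! hcon
      have := no_int hr (by linarith) (r - r2 + r2 - r2)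
      by_cases hrr : r2 ≤ r
      · have : (r2 : ℝ) ≤ r := by exact_mod_cast hrr
        linarith
      · have : (r : ℝ) + 1 ≤ r2 := by exact_mod_cast (not_le.1 hrr)
        linarith
    · obtain ⟨k, rfl⟩ : ∃ k, m = w.length + k := ⟨m - w.length, by omega⟩
      by_contra! hcon
      push_cast at hr hcon
      have := far1 k (by omega) (by omega) (r - r2) (by push_cast; linarith)
      push_cast at this
      linarith
  · intro x hx hx' hx''
    simp only [stepL] at *
    exact wu x hx (by linarith) hx''
  · intro x hx hx' hx''
    simp only [stepL, List.length_append] at *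
    rw [W_add, ww x hx hx' (by linarith)]
    congr 1
    rw [← wu (x - e) (by linarith) (by linarith) (by linarith), ← W_add_int α (x - e) r2]
    simp only [length_W]
    congr 1; linarith
  · intro x
    simp only [stepL, List.length_append]
    obtain ⟨i, r, ⟨c1, c2, c3⟩ | ⟨c1, c2, c3⟩⟩ := cover x
    · by_cases hc : 1 - α - e + d ≤ x - i * α - r
      · exact ⟨i, r, Or.inl ⟨by linarith, c2, c3⟩⟩
      · refine ⟨i + w.length, r - r2, Or.inr ?_⟩
        push_cast
        push Not at hc
        refine ⟨by linarith, by linarith, by omega⟩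
    · exact ⟨i, r, Or.inr ⟨c1, c2, by omega⟩⟩

lemma inv_stepR {α : ℝ} (h0 : 0 < α) (h1 : α < 1) {s : St} (h : Inv α s) (hlt : s.e < s.d) :
    Inv α (stepR s) := by
  obtain ⟨u, w, d, e⟩ := s
  obtain ⟨dpos, epos, dle, ele, upos, wpos, ⟨r1, hd⟩, ⟨r2, he⟩, far1, far2, wu, ww, cover⟩ := h
  simp only at *
  refine ⟨by simpa [stepR] using hlt, epos, by simp [stepR]; linarith, ele,
    by simp [stepR]; omega, wpos, ⟨r1 + r2, ?_⟩, ⟨r2, he⟩, ?_, ?_, ?_, ?_, ?_⟩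
  · simp [stepR]; push_cast; linarith
  · intro m hm hm' r hr
    simp only [stepR, List.length_append] at hm' ⊢
    rcases lt_trichotomy m u.length with hc | hc | hc
    · have := far1 m hm hc r hr; linarith
    · subst hc
      by_contra! hcon
      by_cases hrr : r ≤ r1
      · have : (r : ℝ) ≤ r1 := by exact_mod_cast hrr
        linarith
      · have : (r1 : ℝ) + 1 ≤ r := by exact_mod_cast (not_le.1 hrr)
        linarith
    · obtain ⟨k, rfl⟩ : ∃ k, m = u.length + k := ⟨m - u.length, by omega⟩
      by_contra! hcon
      push_cast at hr hcon
      have := far2 k (by omega) (by omega) (r - r1) (by push_cast; linarith)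
      push_cast at this
      linarith
  · intro m hm hm' r hr
    have := far2 m hm hm' r hr
    simp only [stepR]; linarith
  · intro x hx hx' hx''
    simp only [stepR, List.length_append] at *
    rw [W_add, wu x hx (by linarith) hx'']
    congr 1
    rw [← ww (x + d) (by linarith) (by linarith) (by linarith), ← W_add_int α (x + d) r1]
    simp only [length_W]
    congr 1; linarith
  · intro x hx hx' hx''
    simp only [stepR] at *
    exact ww x hx hx' (by linarith)
  · intro x
    simp only [stepR, List.length_append]
    obtain ⟨i, r, ⟨c1, c2, c3⟩ | ⟨c1, c2, c3⟩⟩ := cover x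
    · exact ⟨i, r, Or.inl ⟨c1, c2, by omega⟩⟩
    · by_cases hc : x - i * α - r < 1 - α + d - e
      · exact ⟨i, r, Or.inr ⟨c1, by linarith, c3⟩⟩
      · refine ⟨i + u.length, r - r1, Or.inl ?_⟩
        push_cast
        push Not at hc
        refine ⟨by linarith, by linarith, by omega⟩

lemma Inv.ne {α : ℝ} (hirr : Irrational α) {s : St} (h : Inv α s) : s.d ≠ s.e := by
  intro heq
  obtain ⟨r1, hd⟩ := h.hd
  obtain ⟨r2, he⟩ := h.he
  have hu := h.upos
  have : α * ((s.u.length + s.w.length : ℕ) : ℝ) = ((r1 + r2 : ℤ) : ℝ) := by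
    push_cast; linarith
  have h2 := hirr.mul_natCast (m := s.u.length + s.w.length) (by omega)
  rw [this] at h2
  exact (Int.not_irrational _) h2

lemma inv_st {α : ℝ} (hirr : Irrational α) (h0 : 0 < α) (h1 : α < 1) (n : ℕ) : Inv α (st α n) := by
  induction n with
  | zero => exact inv_zero h0 h1
  | succ n ih =>
    rw [st, step]
    split_ifs with hc
    · exact inv_stepL h0 h1 ih hc
    · exact inv_stepR h0 h1 ih (lt_of_le_of_ne (not_lt.1 hc) (ih.ne hirr).symm)

/-! The covering by good positions -/

def Bad (α d x : ℝ) : Prop := ∃ r : ℤ, 1 - α - d ≤ x - r ∧ x - r < 1 - α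
def Bad' (α e x : ℝ) : Prop := ∃ r : ℤ, 1 - α ≤ x - r ∧ x - r < 1 - α + e

lemma mism {α d x : ℝ} (h0 : 0 < α) (h1 : α < 1) (hd : 0 < d) (hdα : d ≤ α)
    (hb : ¬ Bad α d x) (hb' : ¬ Bad α d (x - α)) : val α x = val α (x + d) := by
  have e1 : val α x = val α (x - ⌊x⌋) := by
    have := val_add_int α x (-⌊x⌋); push_cast at this; rw [← sub_eq_add_neg] at this; exact this.symm
  have e2 : val α (x + d) = val α (x - ⌊x⌋ + d) := by
    have := val_add_int α (x + d) (-⌊x⌋); push_cast at this; rw [← this]; congr 1; ring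
  have f1 := Int.floor_le x
  have f2 := Int.lt_floor_add_one x
  rw [e1, e2]
  have g1 : ¬ (1 - α - d ≤ x - ⌊x⌋ ∧ x - ⌊x⌋ < 1 - α) := fun h => hb ⟨_, h⟩
  have g2 : ¬ (1 - α - d ≤ x - α - ⌊x⌋ ∧ x - α - ⌊x⌋ < 1 - α) := fun h => hb' ⟨_, h⟩
  generalize hy : x - ⌊x⌋ = y at *
  have hy2 : x - α - ⌊x⌋ = y - α := by linarith
  rw [hy2] at g2
  rcases lt_or_ge y (1 - α) with hc | hc
  · have : y < 1 - α - d := by by_contra! h; exact g1 ⟨h, hc⟩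
    rw [val_zero (by linarith) hc h0, val_zero (by linarith) (by linarith) h0]
  · have : y < 1 - d := by by_contra! h; exact g2 ⟨by linarith, by linarith⟩
    rw [val_one hc (by linarith) h1, val_one (by linarith) (by linarith) h1]

lemma mism' {α e x : ℝ} (h0 : 0 < α) (h1 : α < 1) (hd : 0 < e)
    (hb : ¬ Bad' α e x) (hb' : ¬ Bad' α e (x - α)) : val α x = val α (x - e) := by
  have e1 : val α x = val α (x - ⌊x⌋) := by
    have := val_add_int α x (-⌊x⌋); push_cast at this; rw [← sub_eq_add_neg] at this; exact this.symm
  have e2 : val α (x - e) = val α (x - ⌊x⌋ - e) := by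
    have := val_add_int α (x - e) (-⌊x⌋); push_cast at this; rw [← this]; congr 1; ring
  have f1 := Int.floor_le x
  have f2 := Int.lt_floor_add_one x
  rw [e1, e2]
  have g1 : ¬ (1 - α ≤ x - ⌊x⌋ ∧ x - ⌊x⌋ < 1 - α + e) := fun h => hb ⟨_, h⟩
  have g2 : ¬ (1 - α ≤ x - α - ((⌊x⌋ - 1 : ℤ) : ℝ) ∧ x - α - ((⌊x⌋ - 1 : ℤ) : ℝ) < 1 - α + e) :=
    fun h => hb' ⟨_, h⟩
  push_cast at g2
  generalize hy : x - ⌊x⌋ = y at *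
  have hy2 : x - α - (⌊x⌋ - 1) = y - α + 1 := by linarith
  rw [hy2] at g2
  rcases lt_or_ge y (1 - α) with hc | hc
  · have : e ≤ y := by by_contra! h; exact g2 ⟨by linarith, by linarith⟩
    rw [val_zero (by linarith) hc h0, val_zero (by linarith) (by linarith) h0]
  · have : 1 - α + e ≤ y := by by_contra! h; exact g1 ⟨by linarith, by linarith⟩
    rw [val_one hc (by linarith) h1, val_one (by linarith) (by linarith) h1]

lemma Inv.disj {α : ℝ} {s : St} (h : Inv α s) {x : ℝ} {i k : ℕ}
    (hi : 1 ≤ i) (hi' : i ≤ s.u.length) (hk : 1 ≤ k) (hk' : k ≤ s.w.length)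
    (hb : Bad α s.d (x - i * α)) (hb' : Bad' α s.e (x - k * α)) : False := by
  obtain ⟨r, b1, b2⟩ := hb
  obtain ⟨r', c1, c2⟩ := hb'
  rcases lt_trichotomy i k with hc | hc | hc
  · obtain ⟨m, rfl⟩ : ∃ m, k = i + m := ⟨k - i, by omega⟩
    push_cast at c1 c2
    have := h.far2 m (by omega) (by omega) (r - r') (by push_cast; linarith)
    push_cast at this
    linarith
  · subst hc
    have h1 := h.dle
    have h2 := h.ele
    have := no_int (x := ((r - r' : ℤ) : ℝ)) (by push_cast; linarith) (by push_cast; linarith) (r - r')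
    exact this rfl
  · obtain ⟨m, rfl⟩ : ∃ m, i = k + m := ⟨i - k, by omega⟩
    push_cast at b1 b2
    have := h.far1 m (by omega) (by omega) (r' - r) (by push_cast; linarith)
    push_cast at this
    linarith

lemma trace_shift (lam : ℝ) (E : ℂ) {α x : ℝ} {q : ℕ} (hq : 0 < q)
    (h : val α x = val α (x + q * α)) :
    (transferM lam E (W α x q)).trace = (transferM lam E (W α (x + α) q)).trace := by
  obtain ⟨k, rfl⟩ : ∃ k, q = k + 1 := ⟨q - 1, by omega⟩
  have e1 : W α (x + α) (k + 1) = W α (x + α) k ++ [val α x] := by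
    rw [W_add, W_one, h]; congr 2; push_cast; ring_nf
  have e2 : W α x (k + 1) = [val α x] ++ W α (x + α) k := by
    rw [add_comm k 1, W_add, W_one]; simp
  rw [e1, e2, transferM_append, transferM_append, Matrix.trace_mul_comm]

lemma trace_orbit (lam : ℝ) (E : ℂ) {α x : ℝ} {q : ℕ} (hq : 0 < q) (j : ℕ)
    (h : ∀ i : ℕ, i < j → val α (x + i * α) = val α (x + i * α + q * α)) :
    (transferM lam E (W α x q)).trace = (transferM lam E (W α (x + j * α) q)).trace := by
  induction j with
  | zero => simp
  | succ j ih =>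
    rw [ih fun i hi => h i (by omega), trace_shift lam E hq (h j (by omega))]
    congr 3; push_cast; ring

lemma exists_bad {α d : ℝ} (hd : 0 < d) (x : ℝ) {q : ℕ} {r : ℤ} (hq : (q : ℝ) * α - r = d) :
    ∃ j : ℕ, Bad α d (x + j * α) := by
  obtain ⟨R, hR⟩ := exists_nat_gt (x - (1 - α - d))
  have hfl := Int.floor_le ((1 - α + R - x) / d)
  set m := ⌈(1 - α - d + R - x) / d⌉ with hm
  have g1 := Int.le_ceil ((1 - α - d + R - x) / d)
  have g2 := Int.ceil_lt_add_one ((1 - α - d + R - x) / d)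
  rw [← hm] at g1 g2
  have hm0 : 0 ≤ m := by
    apply Int.ceil_nonneg; apply div_nonneg _ hd.le; linarith
  obtain ⟨k, hk⟩ := Int.eq_ofNat_of_zero_le hm0
  rw [hk] at g1 g2
  simp only [Int.cast_natCast] at g1 g2
  rw [div_le_iff₀ hd] at g1
  have g3 : (k : ℝ) * d < (1 - α - d + R - x) + d := by
    have : (k : ℝ) * d < ((1 - α - d + R - x) / d + 1) * d := by gcongr
    rwa [add_mul, div_mul_cancel₀ _ hd.ne', one_mul] at this
  refine ⟨k * q, R + k * r, ?_⟩
  have : x + ((k * q : ℕ) : ℝ) * α - ((R + k * r : ℤ) : ℝ) = x + k * d - R := by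
    rw [← hq]; push_cast; ring
  rw [this]
  constructor <;> linarith

lemma exists_bad' {α e : ℝ} (he : 0 < e) (x : ℝ) {q : ℕ} {r : ℤ} (hq : r - (q : ℝ) * α = e) :
    ∃ j : ℕ, Bad' α e (x + j * α) := by
  obtain ⟨R, hR⟩ := exists_nat_gt (1 - α + e - x)
  set m := ⌊(x - (1 - α) + R) / e⌋ with hm
  have g1 := Int.floor_le ((x - (1 - α) + R) / e)
  have g2 := Int.lt_floor_add_one ((x - (1 - α) + R) / e)
  rw [← hm] at g1 g2
  have hm0 : 0 ≤ m := by
    apply Int.floor_nonneg.2; apply div_nonneg _ he.le; linarith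
  obtain ⟨k, hk⟩ := Int.eq_ofNat_of_zero_le hm0
  rw [hk] at g1 g2
  simp only [Int.cast_natCast] at g1 g2
  rw [le_div_iff₀ he] at g1
  rw [div_lt_iff₀ he] at g2
  refine ⟨k * q, k * r - R, ?_⟩
  have : x + ((k * q : ℕ) : ℝ) * α - ((k * r - R : ℤ) : ℝ) = x - k * e + R := by
    rw [← hq]; push_cast; ring
  rw [this]
  constructor <;> linarith

/-- Every position is good for one of the two words. -/
lemma good_pos {α : ℝ} (h0 : 0 < α) (h1 : α < 1) {s : St} (h : Inv α s) (hd1 : s.d ≤ 1 - α)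
    (he1 : s.e ≤ α) (lam : ℝ) (E : ℂ) (x : ℝ) :
    ((∀ i : ℕ, 1 ≤ i → i < s.u.length → val α (x - i * α) = val α (x - i * α + s.u.length * α)) ∧
      (transferM lam E (W α x s.u.length)).trace = (transferM lam E s.u).trace) ∨
    ((∀ i : ℕ, 1 ≤ i → i < s.w.length → val α (x - i * α) = val α (x - i * α + s.w.length * α)) ∧
      (transferM lam E (W α x s.w.length)).trace = (transferM lam E s.w).trace) := by
  have hdpos := h.dpos
  have hepos := h.epos
  obtain ⟨r1, hr1⟩ := h.hd
  obtain ⟨r2, hr2⟩ := h.he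
  have shU : ∀ y, val α (y + s.u.length * α) = val α (y + s.d) := by
    intro y; rw [← val_add_int α (y + s.d) r1]; congr 1; linarith
  have shW : ∀ y, val α (y + s.w.length * α) = val α (y - s.e) := by
    intro y; rw [← val_add_int α (y - s.e) r2]; congr 1; linarith
  by_cases hc : ∀ i : ℕ, 1 ≤ i → i ≤ s.u.length → ¬ Bad α s.d (x - i * α)
  · left
    refine ⟨?_, ?_⟩
    · intro i hi hi'
      rw [shU]
      apply mism h0 h1 h.dpos h.dle (hc i hi hi'.le)
      have := hc (i + 1) (by omega) (by omega)
      convert this using 1; push_cast; ring_nf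
    · have hex := exists_bad h.dpos x hr1
      have hj := Nat.find_spec hex
      have hmin : ∀ i, i < Nat.find hex → ¬ Bad α s.d (x + i * α) := fun i hi => Nat.find_min hex hi
      rw [trace_orbit lam E h.upos (Nat.find hex)]
      · obtain ⟨r, b1, b2⟩ := hj
        rw [← W_add_int α _ (-r), h.wu _ _ _ _] <;> push_cast <;> linarith
      · intro i hi
        rw [shU]
        apply mism h0 h1 h.dpos h.dle (hmin i hi)
        rcases Nat.eq_zero_or_pos i with rfl | hi0
        · have := hc 1 le_rfl h.upos
          convert this using 1; push_cast; ring_nf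
        · have := hmin (i - 1) (by omega)
          convert this using 1
          rw [Nat.cast_sub (by omega)]; push_cast; ring_nf
  · right
    push Not at hc
    obtain ⟨k, hk, hk', hbad⟩ := hc
    have hc : ∀ i : ℕ, 1 ≤ i → i ≤ s.w.length → ¬ Bad' α s.e (x - i * α) :=
      fun i hi hi' hb => h.disj hk hk' hi hi' hbad hb
    refine ⟨?_, ?_⟩
    · intro i hi hi'
      rw [shW]
      apply mism' h0 h1 h.epos (hc i hi hi'.le)
      have := hc (i + 1) (by omega) (by omega)
      convert this using 1; push_cast; ring_nf
    · have hex := exists_bad' h.epos x hr2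
      have hj := Nat.find_spec hex
      have hmin : ∀ i, i < Nat.find hex → ¬ Bad' α s.e (x + i * α) := fun i hi => Nat.find_min hex hi
      rw [trace_orbit lam E h.wpos (Nat.find hex)]
      · obtain ⟨r, b1, b2⟩ := hj
        rw [← W_add_int α _ (-r), h.ww _ _ _ _] <;> push_cast <;> linarith
      · intro i hi
        rw [shW]
        apply mism' h0 h1 h.epos (hmin i hi)
        rcases Nat.eq_zero_or_pos i with rfl | hi0
        · have := hc 1 le_rfl h.wpos
          convert this using 1; push_cast; ring_nf
        · have := hmin (i - 1) (by omega)
          convert this using 1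
          rw [Nat.cast_sub (by omega)]; push_cast; ring_nf

end SturmAux


namespace SturmAux

noncomputable def V (v : ℤ → ℝ) (n : ℤ) (m : ℕ) : List ℝ :=
  (List.range m).map fun i : ℕ => v (n + 1 + i)

lemma V_succ (v : ℤ → ℝ) (n : ℤ) (m : ℕ) : V v n (m + 1) = V v n m ++ [v (n + 1 + m)] := by
  simp [V, List.range_succ]

lemma propagate {v : ℤ → ℝ} (hv : ∀ n, |v n| ≤ 1) {lam : ℝ} {E : ℂ} {u f : ℤ → ℂ}
    (hu : ∀ n, u (n + 1) = (E - lam * v n) * u n - u (n - 1) + f n) {K φ : ℝ}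
    (hK : ‖E‖ + |lam| + 2 ≤ K) (hφ : 0 ≤ φ) (n : ℤ) (m : ℕ)
    (hf : ∀ i : ℕ, i < m → ‖f (n + 1 + i)‖ ≤ φ) :
    ‖u (n + m + 1) - (transferM lam E (V v n m) 0 0 * u (n + 1) +
        transferM lam E (V v n m) 0 1 * u n)‖ ≤ K ^ m * φ ∧
    ‖u (n + m) - (transferM lam E (V v n m) 1 0 * u (n + 1) +
        transferM lam E (V v n m) 1 1 * u n)‖ ≤ K ^ m * φ := by
  have hK1 : 1 ≤ K := le_trans (by linarith [norm_nonneg E, abs_nonneg lam]) hK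
  induction m with
  | zero => simp [V, transferM, hφ]
  | succ m ih =>
    obtain ⟨h1, h2⟩ := ih fun i hi => hf i (by omega)
    have hfm := hf m (by omega)
    have hpow : 1 ≤ K ^ m := one_le_pow₀ hK1
    rw [V_succ, transferM_append]
    set P := transferM lam E (V v n m)
    have hrec := hu (n + 1 + m)
    have hvn : ‖E - lam * v (n + 1 + m)‖ ≤ ‖E‖ + |lam| := by
      refine (norm_sub_le _ _).trans ?_
      gcongr
      rw [norm_mul]
      simpa using mul_le_of_le_one_right (abs_nonneg lam) (hv _)
    have i1 : n + ((m + 1 : ℕ) : ℤ) + 1 = n + 1 + m + 1 := by push_cast; ring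
    have i2 : n + ((m + 1 : ℕ) : ℤ) = n + m + 1 := by push_cast; ring
    have i3 : n + 1 + (m : ℤ) - 1 = n + m := by ring
    have i4 : n + 1 + (m : ℤ) = n + m + 1 := by ring
    rw [i1, hrec, i3, i2]
    rw [i4] at hfm hvn ⊢
    simp only [transferM, transferT, Matrix.mul_apply, Fin.sum_univ_two, Matrix.one_mul,
      Matrix.of_apply, Matrix.cons_val_zero, Matrix.cons_val_one, Matrix.cons_val', one_mul,
      zero_mul, add_zero, Matrix.cons_val_fin_one]
    constructor
    · have e : (E - lam * v (n + m + 1)) * u (n + m + 1) - u (n + m) + f (n + m + 1) -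
          (((E - lam * v (n + m + 1)) * P 0 0 + -1 * P 1 0) * u (n + 1) +
           ((E - lam * v (n + m + 1)) * P 0 1 + -1 * P 1 1) * u n) =
          (E - lam * v (n + m + 1)) * (u (n + m + 1) - (P 0 0 * u (n + 1) + P 0 1 * u n)) -
          (u (n + m) - (P 1 0 * u (n + 1) + P 1 1 * u n)) + f (n + m + 1) := by ring
      rw [e]
      refine (norm_add_le _ _).trans ?_
      have := (norm_sub_le ((E - lam * v (n + m + 1)) * (u (n + m + 1) - (P 0 0 * u (n + 1) + P 0 1 * u n)))
          (u (n + m) - (P 1 0 * u (n + 1) + P 1 1 * u n)))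
      rw [norm_mul] at this
      have t1 := mul_le_mul hvn h1 (norm_nonneg _) (by positivity)
      have t2 : φ ≤ K ^ m * φ := by nlinarith
      have t3 : (‖E‖ + |lam| + 2) * (K ^ m * φ) ≤ K * (K ^ m * φ) := by gcongr
      rw [pow_succ]
      nlinarith
    · refine h1.trans ?_
      rw [pow_succ]
      have : 0 ≤ K ^ m * φ := by positivity
      nlinarith

lemma three_term {v : ℤ → ℝ} (hv : ∀ n, |v n| ≤ 1) {lam : ℝ} {E : ℂ} {u f : ℤ → ℂ}
    (hu : ∀ n, u (n + 1) = (E - lam * v n) * u n - u (n - 1) + f n) {K φ : ℝ}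
    (hK : ‖E‖ + |lam| + 2 ≤ K) (hφ : 0 ≤ φ) (p : ℤ) (q : ℕ) (hq : 1 ≤ q)
    (hm : ∀ i : ℕ, 1 ≤ i → i < q → v (p - i) = v (p - i + q))
    (hf : ∀ j : ℤ, |j - p| ≤ q → ‖f j‖ ≤ φ) :
    ‖u (p + q) + u (p - q) - (transferM lam E ([v p] ++ V v p (q - 1))).trace * u p‖
      ≤ 4 * K ^ (2 * q) * φ := by
  have hK1 : 1 ≤ K := le_trans (by linarith [norm_nonneg E, abs_nonneg lam]) hK
  obtain ⟨k, rfl⟩ : ∃ k, q = k + 1 := ⟨q - 1, by omega⟩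
  simp only [Nat.add_sub_cancel]
  have hVV : V v (p - ((k + 1 : ℕ) : ℤ)) k = V v p k := by
    unfold V
    apply List.map_congr_left
    intro i hi
    rw [List.mem_range] at hi
    have := hm (k - i) (by omega) (by omega)
    push_cast [Nat.cast_sub hi.le] at this ⊢
    convert this using 2 <;> ring
  have A1 := (propagate hv hu hK hφ p k (by
    intro i hi; apply hf; rw [abs_le]; push_cast; constructor <;> omega)).1
  have A2 := propagate hv hu hK hφ (p - ((k + 1 : ℕ) : ℤ)) k (by
    intro i hi; apply hf; rw [abs_le]; push_cast; constructor <;> omega)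
  rw [hVV] at A2
  obtain ⟨A2, A3⟩ := A2
  have hP : ∀ i j, ‖transferM lam E (V v p k) i j‖ ≤ K ^ k := by
    intro i j
    refine (norm_entry_le _ _ _).trans ?_
    have := opNorm_transferM_le lam E (V v p k) (by
      intro a ha; simp only [V, List.mem_map] at ha; obtain ⟨i, _, rfl⟩ := ha; exact hv _) hK
    simpa [V] using this
  have hdet := det_transferM lam E (V v p k)
  rw [transferM_append]
  generalize transferM lam E (V v p k) = P at *
  rw [Matrix.det_fin_two] at hdet
  have hfp := hf p (by simp; omega)
  have hup := hu p
  have i1 : p + (k : ℤ) + 1 = p + ((k + 1 : ℕ) : ℤ) := by push_cast; ring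
  have i2 : p - ((k + 1 : ℕ) : ℤ) + k + 1 = p := by push_cast; ring
  have i3 : p - ((k + 1 : ℕ) : ℤ) + k = p - 1 := by push_cast; ring
  rw [i1] at A1
  rw [i2] at A2
  rw [i3] at A3
  have htr : (P * transferM lam E [v p]).trace = P 0 0 * (E - lam * v p) + P 0 1 - P 1 0 := by
    simp [transferM, transferT, Matrix.trace_fin_two, Matrix.mul_apply, Fin.sum_univ_two]; ring
  rw [htr]
  generalize u (p + ((k + 1 : ℕ) : ℤ)) = a1 at *
  generalize u (p - ((k + 1 : ℕ) : ℤ)) = a2 at *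
  generalize u (p - ((k + 1 : ℕ) : ℤ) + 1) = a3 at *
  rw [hup] at A1
  have e : a1 + a2 - (P 0 0 * (E - lam * v p) + P 0 1 - P 1 0) * u p =
      (a1 - (P 0 0 * ((E - lam * v p) * u p - u (p - 1) + f p) + P 0 1 * u p)) +
      (P 1 0 * (u p - (P 0 0 * a3 + P 0 1 * a2)) + (- P 0 0 * (u (p - 1) - (P 1 0 * a3 + P 1 1 * a2))
        + P 0 0 * f p)) := by linear_combination (-a2) * hdet
  rw [e]
  have kk : 1 ≤ K ^ k := one_le_pow₀ hK1
  refine (norm_add_le _ _).trans ?_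
  refine (add_le_add_right (norm_add_le _ _) _).trans ?_
  refine (add_le_add_right (add_le_add_right (norm_add_le _ _) _) _).trans ?_
  simp only [norm_mul, norm_neg]
  have t1 := mul_le_mul (hP 1 0) A2 (norm_nonneg _) (by positivity)
  have t2 := mul_le_mul (hP 0 0) A3 (norm_nonneg _) (by positivity)
  have t3 := mul_le_mul (hP 0 0) hfp (norm_nonneg _) (by positivity)
  have t4 : K ^ k * φ ≤ K ^ k * (K ^ k * φ) := le_mul_of_one_le_left (by positivity) kk
  have t5 : K ^ k * (K ^ k * φ) ≤ K ^ (2 * (k + 1)) * φ := by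
    rw [← mul_assoc, ← pow_add]
    gcongr
    omega
  linarith

lemma weighted {η C : ℝ} (hη : 0 < η) (hC : 0 ≤ C) (Q : ℕ) :
    ∃ r : ℝ, 0 < r ∧ r < 1 ∧ ∀ u f : ℤ → ℂ, (∃ B, ∀ n, ‖u n‖ ≤ B) →
      (∀ p : ℤ, ∃ q : ℕ, q ≤ Q ∧ ∃ x : ℂ, 2 + η ≤ ‖x‖ ∧ ∀ φ : ℝ, 0 ≤ φ →
        (∀ j : ℤ, |j - p| ≤ q → ‖f j‖ ≤ φ) → ‖u (p + q) + u (p - q) - x * u p‖ ≤ C * φ) →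
      ∀ (m : ℤ) (F : ℝ), (∀ n, ‖f n‖ * r ^ (n - m).natAbs ≤ F) → ‖u m‖ ≤ (2 * C / η) * F := by
  set ε := η / (2 * (2 + η) * (Q + 1)) with hε
  have hε0 : 0 < ε := by positivity
  have hQε : Q * ε * (2 + η) ≤ η / 2 := by
    rw [hε]
    rw [show (Q : ℝ) * (η / (2 * (2 + η) * (Q + 1))) * (2 + η) = (Q / (Q + 1)) * (η / 2) by field_simp]
    have : (Q : ℝ) / (Q + 1) ≤ 1 := by rw [div_le_one (by positivity)]; linarith
    nlinarith
  have hε1 : ε < 1 := by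
    rw [hε, div_lt_one (by positivity)]
    have : (0 : ℝ) ≤ Q := by positivity
    nlinarith [mul_nonneg this hη.le]
  refine ⟨1 - ε, by linarith, by linarith, ?_⟩
  have hr := one_add_mul_le_pow (a := -ε) (by linarith) Q
  rw [← sub_eq_add_neg] at hr
  generalize hrr : 1 - ε = r at *
  have hr0 : 0 < r := by linarith
  have hr1 : r ≤ 1 := by linarith
  have hrQ : 2 + η / 2 ≤ (2 + η) * r ^ Q := by nlinarith
  intro u f ⟨B, hB⟩ hp m F hF
  have hF0 : 0 ≤ F := le_trans (by positivity) (hF m)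
  set a : ℤ → ℝ := fun n => r ^ (n - m).natAbs * ‖u n‖ with ha
  have hbdd : BddAbove (Set.range a) := by
    refine ⟨B, ?_⟩
    rintro _ ⟨n, rfl⟩
    have : r ^ (n - m).natAbs ≤ 1 := pow_le_one₀ hr0.le hr1
    exact (mul_le_of_le_one_left (norm_nonneg _) this).trans (hB n)
  have hle : ∀ n, a n ≤ ⨆ n, a n := fun n => le_ciSup hbdd n
  set S := ⨆ n, a n with hS
  have key : ∀ n, (2 + η / 2) * a n ≤ 2 * S + C * F := by
    intro n
    obtain ⟨q, hq, x, hx, h⟩ := hp n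
    set ρ := r ^ ((n - m).natAbs + Q) with hρ
    have hρ0 : 0 < ρ := by positivity
    have h1 := h (F / ρ) (by positivity) (by
      intro j hj
      rw [le_div_iff₀ hρ0]
      refine le_trans ?_ (hF j)
      gcongr
      apply pow_le_pow_of_le_one hr0.le hr1
      rw [abs_le] at hj; omega)
    have h2 : ρ * ‖u (n + q)‖ ≤ S := by
      refine le_trans ?_ (hle (n + q))
      simp only [ha]
      gcongr
      apply pow_le_pow_of_le_one hr0.le hr1
      omega
    have h3 : ρ * ‖u (n - q)‖ ≤ S := by
      refine le_trans ?_ (hle (n - q))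
      simp only [ha]
      gcongr
      apply pow_le_pow_of_le_one hr0.le hr1
      omega
    have h4 : ‖x * u n‖ ≤ ‖u (n + q)‖ + ‖u (n - q)‖ + C * (F / ρ) := by
      have : x * u n = u (n + q) + u (n - q) - (u (n + q) + u (n - q) - x * u n) := by ring
      rw [this]
      exact (norm_sub_le _ _).trans (add_le_add (norm_add_le _ _) h1)
    rw [norm_mul] at h4
    have h5 : ρ * (‖x‖ * ‖u n‖) ≤ 2 * S + C * F := by
      calc ρ * (‖x‖ * ‖u n‖) ≤ ρ * (‖u (n + q)‖ + ‖u (n - q)‖ + C * (F / ρ)) := by gcongr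
        _ = ρ * ‖u (n + q)‖ + ρ * ‖u (n - q)‖ + C * F := by field_simp
        _ ≤ _ := by linarith
    refine le_trans ?_ h5
    have h6 : ρ * ((2 + η) * ‖u n‖) ≤ ρ * (‖x‖ * ‖u n‖) := by gcongr
    refine le_trans ?_ h6
    have : ρ * ((2 + η) * ‖u n‖) = ((2 + η) * r ^ Q) * a n := by
      simp only [ha, hρ, pow_add]; ring
    rw [this]
    gcongr
  have hSle : S ≤ (2 * S + C * F) / (2 + η / 2) := by
    apply ciSup_le
    intro n
    rw [le_div_iff₀ (by positivity)]
    linarith [key n]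
  rw [le_div_iff₀ (by positivity)] at hSle
  have h7 : S ≤ (2 * C / η) * F := by
    rw [div_mul_eq_mul_div, le_div_iff₀ hη]; linarith
  refine le_trans ?_ h7
  have := hle m
  simpa [ha] using this

lemma summable_geom_int {r : ℝ} (h0 : 0 ≤ r) (h1 : r < 1) :
    Summable fun k : ℤ => r ^ k.natAbs := by
  apply Summable.of_nat_of_neg
  · simpa using summable_geometric_of_lt_one h0 h1
  · simpa using summable_geometric_of_lt_one h0 h1

lemma l2_of_weighted {r D : ℝ} (h0 : 0 < r) (h1 : r < 1) (hD : 0 ≤ D) :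
    ∃ D' : ℝ, 0 < D' ∧ ∀ u f : ℤ → ℂ, Summable (fun n => ‖f n‖ ^ 2) → Summable (fun n => ‖u n‖ ^ 2) →
      (∀ (m : ℤ) (F : ℝ), (∀ n, ‖f n‖ * r ^ (n - m).natAbs ≤ F) → ‖u m‖ ≤ D * F) →
      ∑' n, ‖u n‖ ^ 2 ≤ D' * ∑' n, ‖f n‖ ^ 2 := by
  have hr2 : r ^ 2 < 1 := by nlinarith
  have hs := summable_geom_int (r := r ^ 2) (by positivity) hr2
  set G := ∑' k : ℤ, (r ^ 2) ^ k.natAbs with hG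
  have hG0 : 0 ≤ G := tsum_nonneg fun _ => by positivity
  refine ⟨D ^ 2 * G + 1, by positivity, ?_⟩
  intro u f hf hu h
  have hT : ∀ m : ℤ, Summable fun n : ℤ => ‖f n‖ ^ 2 * (r ^ 2) ^ (n - m).natAbs := by
    intro m
    refine Summable.of_nonneg_of_le (fun _ => by positivity) (fun n => ?_) hf
    exact mul_le_of_le_one_right (by positivity) (pow_le_one₀ (by positivity) hr2.le)
  have hpt : ∀ m, ‖u m‖ ^ 2 ≤ D ^ 2 * ∑' n : ℤ, ‖f n‖ ^ 2 * (r ^ 2) ^ (n - m).natAbs := by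
    intro m
    have := h m (Real.sqrt (∑' n : ℤ, ‖f n‖ ^ 2 * (r ^ 2) ^ (n - m).natAbs)) (by
      intro n
      apply Real.le_sqrt_of_sq_le
      have := (hT m).le_tsum n (fun _ _ => by positivity)
      refine le_trans (le_of_eq ?_) this
      rw [mul_pow, ← pow_mul, ← pow_mul, mul_comm 2])
    calc ‖u m‖ ^ 2 ≤ (D * Real.sqrt (∑' n : ℤ, ‖f n‖ ^ 2 * (r ^ 2) ^ (n - m).natAbs)) ^ 2 := by gcongr
      _ = _ := by rw [mul_pow, Real.sq_sqrt (tsum_nonneg fun _ => by positivity)]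
  have hmain : ENNReal.ofReal (∑' n, ‖u n‖ ^ 2) ≤ ENNReal.ofReal (D ^ 2 * G * ∑' n, ‖f n‖ ^ 2) := by
    rw [ENNReal.ofReal_tsum_of_nonneg (fun _ => by positivity) hu]
    calc ∑' m, ENNReal.ofReal (‖u m‖ ^ 2)
        ≤ ∑' m : ℤ, ENNReal.ofReal (D ^ 2) * ∑' n : ℤ, ENNReal.ofReal (‖f n‖ ^ 2) *
            ENNReal.ofReal ((r ^ 2) ^ (n - m).natAbs) := by
          apply ENNReal.tsum_le_tsum
          intro m
          refine (ENNReal.ofReal_le_ofReal (hpt m)).trans (le_of_eq ?_)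
          rw [ENNReal.ofReal_mul (by positivity),
            ENNReal.ofReal_tsum_of_nonneg (fun _ => by positivity) (hT m)]
          congr 1
          apply tsum_congr
          intro n
          rw [ENNReal.ofReal_mul (by positivity)]
      _ = ENNReal.ofReal (D ^ 2) * ∑' n : ℤ, ENNReal.ofReal (‖f n‖ ^ 2) *
            ∑' m : ℤ, ENNReal.ofReal ((r ^ 2) ^ (n - m).natAbs) := by
          rw [ENNReal.tsum_mul_left, ENNReal.tsum_comm]
          congr 1
          apply tsum_congr
          intro n
          rw [ENNReal.tsum_mul_left]
      _ = ENNReal.ofReal (D ^ 2) * ∑' n : ℤ, ENNReal.ofReal (‖f n‖ ^ 2) * ENNReal.ofReal G := by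
          congr 1
          apply tsum_congr
          intro n
          congr 1
          rw [hG, ENNReal.ofReal_tsum_of_nonneg (fun _ => by positivity) hs]
          exact (Equiv.subLeft n).tsum_eq (fun k : ℤ => ENNReal.ofReal ((r ^ 2) ^ k.natAbs))
      _ = _ := by
          rw [ENNReal.tsum_mul_right, ENNReal.ofReal_mul (by positivity),
            ENNReal.ofReal_mul (by positivity),
            ENNReal.ofReal_tsum_of_nonneg (fun _ => by positivity) hf]
          ring
  have hfn : 0 ≤ ∑' n, ‖f n‖ ^ 2 := tsum_nonneg fun _ => by positivity
  rw [ENNReal.ofReal_le_ofReal_iff (by positivity)] at hmain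
  linarith

end SturmAux

namespace SturmAux

noncomputable abbrev L2 := lp (fun _ : ℤ => ℂ) 2

lemma L2_summable (u : L2) : Summable fun n => ‖u n‖ ^ 2 := by
  have := lp.memℓp u
  have h := (memℓp_gen_iff (p := 2) (by norm_num)).1 this
  simpa using h

lemma L2_norm (u : L2) : ‖u‖ ^ 2 = ∑' n, ‖u n‖ ^ 2 := by
  have h := lp.norm_rpow_eq_tsum (p := 2) (by norm_num) u
  simpa using h

lemma summable_shift (x y : L2) (k l : ℤ) :
    Summable fun n : ℤ => y (n + k) * (starRingEnd ℂ) (x (n + l)) := by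
  have h1 : Summable fun n : ℤ => ‖y (n + k)‖ ^ 2 :=
    (Equiv.addRight k).summable_iff (f := fun n : ℤ => ‖y n‖ ^ 2) |>.2 (L2_summable y)
  have h2 : Summable fun n : ℤ => ‖x (n + l)‖ ^ 2 :=
    (Equiv.addRight l).summable_iff (f := fun n : ℤ => ‖x n‖ ^ 2) |>.2 (L2_summable x)
  refine Summable.of_norm_bounded (h1.add h2) fun n => ?_
  rw [norm_mul, RCLike.norm_conj]
  have aux : ∀ a b : ℝ, 0 ≤ a → 0 ≤ b → a * b ≤ a ^ 2 + b ^ 2 := fun a b ha hb => by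
    nlinarith [sq_nonneg (a - b), mul_nonneg ha hb]
  exact aux _ _ (norm_nonneg _) (norm_nonneg _)

lemma tsum_shift (f : ℤ → ℂ) (k : ℤ) : ∑' n, f (n + k) = ∑' n, f n :=
  (Equiv.addRight k).tsum_eq f

lemma isSelfAdjoint_H {v : ℤ → ℝ} (hv : ∀ n, |v n| ≤ 1) (lam : ℝ) (H : L2 →L[ℂ] L2)
    (hH : ∀ u : L2, ∀ n : ℤ, H u n = u (n + 1) + u (n - 1) + (lam * v n : ℝ) * u n) :
    IsSelfAdjoint H := by
  rw [ContinuousLinearMap.isSelfAdjoint_iff_isSymmetric]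
  intro x y
  simp only [ContinuousLinearMap.coe_coe]
  rw [lp.inner_eq_tsum, lp.inner_eq_tsum]
  simp only [RCLike.inner_apply, hH, map_add, map_mul, Complex.conj_ofReal]
  have sv : Summable fun n : ℤ => ((lam * v n : ℝ) : ℂ) * (y n * (starRingEnd ℂ) (x n)) := by
    have h := (summable_shift x y 0 0).norm
    simp only [add_zero] at h
    refine Summable.of_norm_bounded (h.mul_left |lam|) fun n => ?_
    rw [norm_mul]
    gcongr
    rw [Complex.norm_real, Real.norm_eq_abs, abs_mul]
    exact mul_le_of_le_one_right (abs_nonneg _) (hv n)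
  have s1 := summable_shift x y 0 1
  have s2 := summable_shift x y 0 (-1)
  have s3 := summable_shift x y 1 0
  have s4 := summable_shift x y (-1) 0
  have e1 := tsum_shift (fun n => y n * (starRingEnd ℂ) (x (n + -1))) 1
  have e2 := tsum_shift (fun n => y n * (starRingEnd ℂ) (x (n + 1))) (-1)
  simp only [add_zero, neg_add_cancel_right, add_neg_cancel_right] at s1 s2 s3 s4 e1 e2
  have a1 : ∀ n : ℤ, y n * ((starRingEnd ℂ) (x (n + 1)) + (starRingEnd ℂ) (x (n - 1)) +
      ((lam * v n : ℝ) : ℂ) * (starRingEnd ℂ) (x n)) = y n * (starRingEnd ℂ) (x (n + 1)) +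
      y n * (starRingEnd ℂ) (x (n + -1)) + ((lam * v n : ℝ) : ℂ) * (y n * (starRingEnd ℂ) (x n)) := by
    intro n; rw [← sub_eq_add_neg]; ring
  have a2 : ∀ n : ℤ, (y (n + 1) + y (n - 1) + ((lam * v n : ℝ) : ℂ) * y n) * (starRingEnd ℂ) (x n)
      = y (n + 1) * (starRingEnd ℂ) (x n) +
      y (n + -1) * (starRingEnd ℂ) (x n) + ((lam * v n : ℝ) : ℂ) * (y n * (starRingEnd ℂ) (x n)) := by
    intro n; rw [← sub_eq_add_neg]; ring
  simp only [a1, a2]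
  rw [(s1.add s2).tsum_add sv, s1.tsum_add s2, (s3.add s4).tsum_add sv, s3.tsum_add s4, e1, e2]
  ring

lemma isUnit_of_bdd {T : L2 →L[ℂ] L2} (hT : IsSelfAdjoint T) {c : ℝ} (hc : 0 < c)
    (h : ∀ u, ‖u‖ ≤ c * ‖T u‖) : IsUnit T := by
  have hanti : AntilipschitzWith ⟨c, hc.le⟩ T := by
    apply ContinuousLinearMap.antilipschitz_of_bound
    exact h
  rw [ContinuousLinearMap.isUnit_iff_bijective]
  refine ⟨hanti.injective, ?_⟩
  have hcl : IsClosed (Set.range T) := hanti.isClosed_range T.uniformContinuous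
  have hker : T.ker = ⊥ := LinearMap.ker_eq_bot.2 hanti.injective
  have horth : (T.range)ᗮ = ⊥ := by
    rw [ContinuousLinearMap.orthogonal_range, hT.adjoint_eq]; exact hker
  have : CompleteSpace T.range := by
    have : IsClosed (T.range : Set L2) := hcl
    exact this.completeSpace_coe
  rw [Submodule.orthogonal_eq_bot_iff] at horth
  exact LinearMap.range_eq_top.1 horth

lemma not_mem_spectrum {v : ℤ → ℝ} (hv : ∀ n, |v n| ≤ 1) (lam : ℝ) (H : L2 →L[ℂ] L2)
    (hH : ∀ u : L2, ∀ n : ℤ, H u n = u (n + 1) + u (n - 1) + (lam * v n : ℝ) * u n)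
    {E : ℂ} {η : ℝ} (hη : 0 < η) (Q : ℕ)
    (h : ∀ p : ℤ, ∃ q : ℕ, 1 ≤ q ∧ q ≤ Q ∧ (∀ i : ℕ, 1 ≤ i → i < q → v (p - i) = v (p - i + q)) ∧
      2 + η ≤ ‖(transferM lam E ([v p] ++ V v p (q - 1))).trace‖) : E ∉ spectrum ℂ H := by
  intro hE
  have hsa := isSelfAdjoint_H hv lam H hH
  have hre := hsa.mem_spectrum_eq_re hE
  set K := ‖E‖ + |lam| + 2 with hK
  have hK1 : 1 ≤ K := by linarith [norm_nonneg E, abs_nonneg lam]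
  have hC : (0 : ℝ) ≤ 4 * K ^ (2 * Q) := by positivity
  obtain ⟨r, hr0, hr1, hw⟩ := weighted hη hC Q
  obtain ⟨D', hD', hl2⟩ := l2_of_weighted (D := 2 * (4 * K ^ (2 * Q)) / η) hr0 hr1 (by positivity)
  rw [spectrum.mem_iff] at hE
  apply hE
  have hsaT : IsSelfAdjoint (algebraMap ℂ (L2 →L[ℂ] L2) E - H) := by
    refine IsSelfAdjoint.sub ?_ hsa
    rw [hre]
    rw [IsSelfAdjoint, ← algebraMap_star_comm]
    simp
  refine isUnit_of_bdd hsaT (c := Real.sqrt D') (Real.sqrt_pos.2 hD') fun u => ?_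
  set g : L2 := (algebraMap ℂ (L2 →L[ℂ] L2) E - H) u with hg
  have hgn : ∀ n, g n = E * u n - (u (n + 1) + u (n - 1) + (lam * v n : ℝ) * u n) := by
    intro n
    rw [hg, ← hH u n]
    simp [Algebra.algebraMap_eq_smul_one]
    rfl
  have hsg : Summable fun n => ‖-g n‖ ^ 2 := by simpa using L2_summable g
  have hu : ∀ n, u (n + 1) = (E - lam * v n) * u n - u (n - 1) + (-g n) := by
    intro n; rw [hgn]; push_cast; ring
  have key := hl2 (fun n => u n) (fun n => -g n) hsg (L2_summable u) (by
    refine hw _ _ ⟨‖u‖, fun n => lp.norm_apply_le_norm (by norm_num) u n⟩ ?_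
    intro p
    obtain ⟨q, hq1, hqQ, hm, htr⟩ := h p
    refine ⟨q, hqQ, _, htr, fun φ hφ hf => ?_⟩
    refine (three_term hv hu (le_refl K) hφ p q hq1 hm hf).trans ?_
    gcongr)
  have h2 : ‖u‖ ^ 2 ≤ D' * ‖g‖ ^ 2 := by
    rw [L2_norm, L2_norm]; simpa using key
  have h3 : (Real.sqrt D' * ‖g‖) ^ 2 = D' * ‖g‖ ^ 2 := by
    rw [mul_pow, Real.sq_sqrt hD'.le]
  rw [← h3] at h2
  exact (pow_le_pow_iff_left₀ (norm_nonneg _) (by positivity) two_ne_zero).1 h2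

lemma window_eq (α θ : ℝ) (p : ℤ) (q : ℕ) (hq : 1 ≤ q) :
    [sturmian α θ p] ++ V (sturmian α θ) p (q - 1) = W α (p * α + θ) q := by
  obtain ⟨k, rfl⟩ : ∃ k, q = k + 1 := ⟨q - 1, by omega⟩
  simp only [Nat.add_sub_cancel, V, W, List.range_succ_eq_map, List.map_cons, List.map_map]
  simp only [sturmian_eq_val, List.singleton_append]
  congr 1
  · simp
  · apply List.map_congr_left
    intro i _
    simp only [Function.comp]
    congr 1
    push_cast; ring

lemma sturm_abs (α θ : ℝ) (n : ℤ) : |sturmian α θ n| ≤ 1 := by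
  unfold sturmian; split_ifs <;> simp

lemma spectrum_bound {α θ lam : ℝ} (H : L2 →L[ℂ] L2)
    (hH : ∀ u : L2, ∀ n : ℤ, H u n = u (n + 1) + u (n - 1) + (lam * sturmian α θ n : ℝ) * u n)
    {E : ℂ} (hE : E ∈ spectrum ℂ H) : ‖E‖ ≤ 2 + |lam| := by
  by_contra hc
  push Not at hc
  refine not_mem_spectrum (sturm_abs α θ) lam H hH (η := ‖E‖ - (2 + |lam|)) (by linarith) 1 ?_ hE
  intro p
  refine ⟨1, le_refl _, le_refl _, fun i h1 h2 => by omega, ?_⟩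
  have : (transferM lam E ([sturmian α θ p] ++ V (sturmian α θ) p (1 - 1))).trace
      = E - lam * sturmian α θ p := by
    simp [V, transferM, transferT, Matrix.trace_fin_two]
  rw [this]
  have h1 := norm_sub_norm_le E (lam * sturmian α θ p)
  have h2 : ‖(lam : ℂ) * sturmian α θ p‖ ≤ |lam| := by
    rw [norm_mul, Complex.norm_real, Complex.norm_real, Real.norm_eq_abs, Real.norm_eq_abs]
    exact mul_le_of_le_one_right (abs_nonneg _) (sturm_abs α θ p)
  linarith

lemma spectrum_trace {α θ lam : ℝ} (h0 : 0 < α) (h1 : α < 1) (H : L2 →L[ℂ] L2)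
    (hH : ∀ u : L2, ∀ n : ℤ, H u n = u (n + 1) + u (n - 1) + (lam * sturmian α θ n : ℝ) * u n)
    {E : ℂ} (hE : E ∈ spectrum ℂ H) {s : St} (hs : Inv α s) (hd1 : s.d ≤ 1 - α) (he1 : s.e ≤ α) :
    ‖(transferM lam E s.u).trace‖ ≤ 2 ∨ ‖(transferM lam E s.w).trace‖ ≤ 2 := by
  by_contra hc
  push Not at hc
  obtain ⟨hu, hw⟩ := hc
  refine not_mem_spectrum (sturm_abs α θ) lam H hH
    (η := min (‖(transferM lam E s.u).trace‖ - 2) (‖(transferM lam E s.w).trace‖ - 2))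
    (lt_min (by linarith) (by linarith)) (max s.u.length s.w.length) ?_ hE
  intro p
  have tr : ∀ l : ℕ, (∀ i : ℕ, 1 ≤ i → i < l → val α ((p * α + θ) - i * α) =
      val α ((p * α + θ) - i * α + l * α)) →
      ∀ i : ℕ, 1 ≤ i → i < l → sturmian α θ (p - i) = sturmian α θ (p - i + l) := by
    intro l hl i hi1 hi2
    have := hl i hi1 hi2
    rw [sturmian_eq_val, sturmian_eq_val]
    convert this using 2 <;> push_cast <;> ring
  have hul := hs.upos
  have hwl := hs.wpos
  rcases good_pos h0 h1 hs hd1 he1 lam E (p * α + θ) with ⟨hm, ht⟩ | ⟨hm, ht⟩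
  · refine ⟨s.u.length, hul, le_max_left _ _, tr _ hm, ?_⟩
    rw [window_eq _ _ _ _ hul, ht]
    linarith [min_le_left (‖(transferM lam E s.u).trace‖ - 2) (‖(transferM lam E s.w).trace‖ - 2)]
  · refine ⟨s.w.length, hwl, le_max_right _ _, tr _ hm, ?_⟩
    rw [window_eq _ _ _ _ hwl, ht]
    linarith [min_le_right (‖(transferM lam E s.u).trace‖ - 2) (‖(transferM lam E s.w).trace‖ - 2)]

end SturmAux

namespace SturmAux

lemma fv_transfer (lam : ℝ) (E : ℂ) (α : ℝ) (n : ℕ) :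
    fv (transferM lam E (st α n).u) (transferM lam E (st α n).w) = 4 + (lam : ℂ) ^ 2 := by
  induction n with
  | zero =>
    simp [st, fv, transferM, transferT, Matrix.trace_fin_two]
    ring
  | succ n ih =>
    rw [st, step]
    split_ifs with hc
    · simp only [stepL, transferM_append]
      rw [fv_step _ _ (det_transferM _ _ _), ih]
    · simp only [stepR, transferM_append]
      rw [fv_comm, fv_step _ _ (det_transferM _ _ _), fv_comm, ih]

lemma st_letters (α : ℝ) (n : ℕ) : (∀ a ∈ (st α n).u, |a| ≤ 1) ∧ (∀ a ∈ (st α n).w, |a| ≤ 1) := by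
  induction n with
  | zero => simp [st]
  | succ n ih =>
    obtain ⟨h1, h2⟩ := ih
    rw [st, step]
    split_ifs with hc
    · refine ⟨h1, fun a ha => ?_⟩
      simp only [stepL, List.mem_append] at ha
      exact ha.elim (h2 a) (h1 a)
    · refine ⟨fun a ha => ?_, h2⟩
      simp only [stepR, List.mem_append] at ha
      exact ha.elim (h1 a) (h2 a)

lemma pers {A B : Mat} {l : ℝ} (h : fv A B = 4 + (l : ℂ) ^ 2)
    (g1 : ‖A.trace‖ ≤ 2 ∨ ‖B.trace‖ ≤ 2) (g2 : ‖A.trace‖ ≤ 2 ∨ ‖(A * B).trace‖ ≤ 2) :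
    ‖A.trace‖ ≤ 10 + l ^ 2 := by
  by_cases hA : ‖A.trace‖ ≤ 2
  · nlinarith [sq_nonneg l]
  · have hB := g1.resolve_left hA
    have hz := g2.resolve_left hA
    have := fv_aux (le_refl (2 : ℝ)) h hB hz
    linarith

lemma sw {A B : Mat} {l : ℝ} (h : fv A B = 4 + (l : ℂ) ^ 2)
    (hA : ‖A.trace‖ ≤ 10 + l ^ 2) (hB : ‖B.trace‖ ≤ 10 + l ^ 2) :
    ‖(A * B).trace‖ ≤ 2 + 2 * (10 + l ^ 2) ^ 2 + l ^ 2 := by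
  refine fv_aux (c := 10 + l ^ 2) (by nlinarith [sq_nonneg l]) (y := A.trace) (z := B.trace) ?_ hA hB
  rw [← h, fv]; ring

lemma suffix_append {s a b : List ℝ} (h : s <:+ a ++ b) : s <:+ b ∨ ∃ s', s' <:+ a ∧ s = s' ++ b := by
  obtain ⟨t, ht⟩ := h
  rcases List.append_eq_append_iff.1 ht with ⟨c, h1, h2⟩ | ⟨c, h1, h2⟩
  · right
    exact ⟨c, ⟨t, h1.symm⟩, h2⟩
  · left
    exact ⟨c, h2.symm⟩

lemma growth_base {lam : ℝ} {E : ℂ} {u w s : List ℝ} {K : ℝ} (hK : ‖E‖ + |lam| + 2 ≤ K)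
    (hu : ∀ a ∈ u, |a| ≤ 1) (hw : ∀ a ∈ w, |a| ≤ 1) (hs : s <:+ u ∨ s <:+ w) :
    PhiL (transferM lam E u) (transferM lam E w) (transferM lam E s)
      (K ^ (4 * (u.length + w.length))) := by
  have hK1 : 1 ≤ K := le_trans (by linarith [norm_nonneg E, abs_nonneg lam]) hK
  have hsl : s.length ≤ u.length + w.length := by
    rcases hs with h | h <;> have := h.length_le <;> omega
  have hsm : ∀ a ∈ s, |a| ≤ 1 := by
    intro a ha
    rcases hs with h | h
    · exact hu a (h.subset ha)
    · exact hw a (h.subset ha)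
  have key : ∀ l : List ℝ, (∀ a ∈ l, |a| ≤ 1) → l.length ≤ 4 * (u.length + w.length) →
      opNorm (transferM lam E l) ≤ K ^ (4 * (u.length + w.length)) := by
    intro l hl hll
    exact (opNorm_transferM_le lam E l hl hK).trans (pow_le_pow_right₀ hK1 hll)
  refine ⟨?_, ?_, ?_, ?_, ?_, ?_⟩
  all_goals
    try simp only [← transferM_append]
    apply key
    · intro a ha
      try simp only [List.mem_append] at ha
      grind
    · try simp only [List.length_append]
      omega

def Gr (lam : ℝ) (E : ℂ) (s : St) (b : ℝ) : Prop :=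
  ∀ x : List ℝ, (x <:+ s.u ∨ x <:+ s.w) →
    (s.d < s.e → PhiL (transferM lam E s.u) (transferM lam E s.w) (transferM lam E x) b) ∧
    (¬ s.d < s.e → PhiL (transferM lam E s.w) (transferM lam E s.u) (transferM lam E x) b)

noncomputable def K2 (lam : ℝ) : ℝ := 2 + 2 * (10 + lam ^ 2) ^ 2 + lam ^ 2
noncomputable def G (lam : ℝ) : ℝ := (2 * K2 lam + 1) * (K2 lam + 1) ^ 2

lemma K2_ge (lam : ℝ) : 10 + lam ^ 2 ≤ K2 lam := by
  unfold K2; nlinarith [sq_nonneg lam]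

lemma K2_pos (lam : ℝ) : 0 < K2 lam := by unfold K2; positivity

lemma growth_step {α lam : ℝ} {E : ℂ} {n : ℕ}
    (hgood : ∀ m, n ≤ m → ‖(transferM lam E (st α m).u).trace‖ ≤ 2 ∨
      ‖(transferM lam E (st α m).w).trace‖ ≤ 2) {b : ℝ} (hb : Gr lam E (st α n) b) :
    Gr lam E (st α (n + 1)) (G lam * b) := by
  have hK2 := K2_pos lam
  have hKge := K2_ge lam
  -- persistent trace at level m
  have hpL : ∀ m, n ≤ m → (st α m).d < (st α m).e →
      ‖(transferM lam E (st α m).u).trace‖ ≤ 10 + lam ^ 2 := by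
    intro m hm hc
    refine pers (fv_transfer lam E α m) (hgood m hm) ?_
    have := hgood (m + 1) (by omega)
    rw [st, step, if_pos hc] at this
    simpa only [stepL, transferM_append] using this
  have hpR : ∀ m, n ≤ m → ¬ (st α m).d < (st α m).e →
      ‖(transferM lam E (st α m).w).trace‖ ≤ 10 + lam ^ 2 := by
    intro m hm hc
    refine pers ((fv_comm _ _).trans (fv_transfer lam E α m)) (hgood m hm).symm ?_
    have := hgood (m + 1) (by omega)
    rw [st, step, if_neg hc] at this
    simpa only [stepR, transferM_append] using this.symm
  have hb0 : 0 ≤ b := by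
    have := hb (st α n).u (Or.inl (List.suffix_refl _))
    by_cases hc : (st α n).d < (st α n).e
    · exact (opNorm_nonneg _).trans (this.1 hc).1
    · exact (opNorm_nonneg _).trans (this.2 hc).1
  have hle : (K2 lam + 1) ^ 2 * b ≤ G lam * b := by
    unfold G
    have : 0 ≤ (K2 lam + 1) ^ 2 * b := by positivity
    nlinarith
  have hG : (2 * K2 lam + 1) * ((K2 lam + 1) ^ 2 * b) = G lam * b := by unfold G; ring
  have hfv1 := fv_transfer lam E α (n + 1)
  have hpL1 := hpL (n + 1) (by omega)
  have hpR1 := hpR (n + 1) (by omega)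
  by_cases hc : (st α n).d < (st α n).e
  · have htr := (hpL n le_rfl hc)
    have heq : st α (n + 1) = stepL (st α n) := by rw [st, step, if_pos hc]
    have main : ∀ x : List ℝ, (x <:+ (st α (n + 1)).u ∨ x <:+ (st α (n + 1)).w) →
        PhiL (transferM lam E (st α (n + 1)).u) (transferM lam E (st α (n + 1)).w)
          (transferM lam E x) ((K2 lam + 1) ^ 2 * b) := by
      intro x hx
      rw [heq] at hx ⊢
      simp only [stepL, transferM_append] at hx ⊢
      have hx' : x <:+ (st α n).u ∨ ∃ s', s' <:+ (st α n).w ∧ x = s' ++ (st α n).u := by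
        rcases hx with h | h
        · exact Or.inl h
        · exact suffix_append h
      rcases hx' with h | ⟨s', hs', rfl⟩
      · exact ((hb x (Or.inl h)).1 hc).step1 (det_transferM _ _ _) (htr.trans hKge)
      · rw [transferM_append]
        exact ((hb s' (Or.inr hs')).1 hc).step2 (det_transferM _ _ _) (htr.trans hKge)
    intro x hx
    have hm := main x hx
    refine ⟨fun _ => hm.mono hle, fun hc' => ?_⟩
    rw [← hG]
    have hA : ‖(transferM lam E (st α (n + 1)).u).trace‖ ≤ 10 + lam ^ 2 := by rw [heq]; exact htr
    exact hm.switch (det_transferM _ _ _) (det_transferM _ _ _) (hA.trans hKge)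
      (sw hfv1 hA (hpR1 hc'))
  · have htr := (hpR n le_rfl hc)
    have heq : st α (n + 1) = stepR (st α n) := by rw [st, step, if_neg hc]
    have main : ∀ x : List ℝ, (x <:+ (st α (n + 1)).u ∨ x <:+ (st α (n + 1)).w) →
        PhiL (transferM lam E (st α (n + 1)).w) (transferM lam E (st α (n + 1)).u)
          (transferM lam E x) ((K2 lam + 1) ^ 2 * b) := by
      intro x hx
      rw [heq] at hx ⊢
      simp only [stepR, transferM_append] at hx ⊢
      have hx' : x <:+ (st α n).w ∨ ∃ s', s' <:+ (st α n).u ∧ x = s' ++ (st α n).w := by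
        rcases hx with h | h
        · exact suffix_append h
        · exact Or.inl h
      rcases hx' with h | ⟨s', hs', rfl⟩
      · exact ((hb x (Or.inr h)).2 hc).step1 (det_transferM _ _ _) (htr.trans hKge)
      · rw [transferM_append]
        exact ((hb s' (Or.inl hs')).2 hc).step2 (det_transferM _ _ _) (htr.trans hKge)
    intro x hx
    have hm := main x hx
    refine ⟨fun hc' => ?_, fun _ => hm.mono hle⟩
    rw [← hG]
    have hA : ‖(transferM lam E (st α (n + 1)).w).trace‖ ≤ 10 + lam ^ 2 := by rw [heq]; exact htr
    exact hm.switch (det_transferM _ _ _) (det_transferM _ _ _) (hA.trans hKge)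
      (sw ((fv_comm _ _).trans hfv1) hA (hpL1 hc'))

lemma growth {α lam : ℝ} {E : ℂ} {n : ℕ} {K : ℝ} (hK : ‖E‖ + |lam| + 2 ≤ K)
    (hgood : ∀ m, n ≤ m → ‖(transferM lam E (st α m).u).trace‖ ≤ 2 ∨
      ‖(transferM lam E (st α m).w).trace‖ ≤ 2) (m : ℕ) :
    Gr lam E (st α (n + m)) (G lam ^ m * K ^ (4 * ((st α n).u.length + (st α n).w.length))) := by
  induction m with
  | zero =>
    intro x hx
    obtain ⟨h1, h2⟩ := st_letters α n
    rw [pow_zero, one_mul]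
    rw [Nat.add_zero] at hx ⊢
    have g1 := growth_base hK h1 h2 hx
    have g2 := growth_base hK h2 h1 hx.symm
    rw [add_comm (st α n).w.length] at g2
    exact ⟨fun _ => g1, fun _ => g2⟩
  | succ m ih =>
    have := growth_step (fun k hk => hgood k (by omega)) ih
    rw [pow_succ', mul_assoc, ← Nat.add_assoc]
    exact this

lemma growth_opNorm {lam : ℝ} {E : ℂ} {s : St} {b : ℝ} (h : Gr lam E s b) {x : List ℝ}
    (hx : x <:+ s.u ∨ x <:+ s.w) : opNorm (transferM lam E x) ≤ b := by
  by_cases hc : s.d < s.e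
  · exact ((h x hx).1 hc).1
  · exact ((h x hx).2 hc).1

end SturmAux

namespace SturmAux

lemma two_blocks {lam : ℝ} {E : ℂ} {b : ℝ} (hb1 : 1 ≤ b) {p F q b1 b2 : List ℝ}
    (h : p ++ (F ++ q) = b1 ++ b2) (hp : p.length ≤ b1.length)
    (h1 : ∀ x, x <:+ b1 → opNorm (transferM lam E x) ≤ b)
    (h2 : ∀ x, x <:+ b2 → opNorm (transferM lam E x) ≤ b) :
    opNorm (transferM lam E F) ≤ 3 * b ^ 3 := by
  obtain ⟨s, rfl, hs⟩ : ∃ s, b1 = p ++ s ∧ F ++ q = s ++ b2 := by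
    rcases List.append_eq_append_iff.1 h with ⟨c, e1, e2⟩ | ⟨c, e1, e2⟩
    · exact ⟨c, e1, e2⟩
    · have : c = [] := by
        have := congrArg List.length e1
        simp at this
        exact List.length_eq_zero_iff.1 (by omega)
      subst this
      exact ⟨[], by simpa using e1.symm, by simpa using e2.symm⟩
  have hss : opNorm (transferM lam E s) ≤ b := h1 s ⟨p, rfl⟩
  rcases List.append_eq_append_iff.1 hs with ⟨c, e1, e2⟩ | ⟨c, e1, e2⟩
  · -- s = F ++ c
    have hc : opNorm (transferM lam E c) ≤ b := h1 c ⟨p ++ F, by rw [e1]; simp⟩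
    have := opNorm_cancel_left (det_transferM lam E c) (X := transferM lam E F)
      (S := transferM lam E s) (by rw [e1, transferM_append])
    refine this.trans ?_
    calc 3 * opNorm (transferM lam E c) * opNorm (transferM lam E s) ≤ 3 * b * b :=
          mul_le_mul (by linarith) hss (opNorm_nonneg _) (by positivity)
      _ ≤ 3 * b ^ 3 := by nlinarith [mul_nonneg (mul_nonneg (by linarith : (0:ℝ) ≤ b) (by linarith : (0:ℝ) ≤ b)) (by linarith : (0:ℝ) ≤ b - 1)]
  · -- F = s ++ c, b2 = c ++ q
    have hq : opNorm (transferM lam E q) ≤ b := h2 q ⟨c, e2.symm⟩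
    have hbb : opNorm (transferM lam E b2) ≤ b := h2 b2 (List.suffix_refl _)
    have hc := opNorm_cancel_left (det_transferM lam E q) (X := transferM lam E c)
      (S := transferM lam E b2) (by rw [e2, transferM_append])
    have hc' : opNorm (transferM lam E c) ≤ 3 * b * b :=
      hc.trans (mul_le_mul (by linarith) hbb (opNorm_nonneg _) (by positivity))
    rw [e1, transferM_append]
    refine (opNorm_mul_le _ _).trans ?_
    calc _ ≤ 3 * b * b * b := mul_le_mul hc' hss (opNorm_nonneg _) (by positivity)
      _ = 3 * b ^ 3 := by ring

lemma window_bound {α lam : ℝ} {E : ℂ} {b : ℝ} (hb1 : 1 ≤ b) {s : St} (h : Inv α s)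
    (hs : ∀ x, (x <:+ s.u ∨ x <:+ s.w) → opNorm (transferM lam E x) ≤ b) {N : ℕ}
    (hNu : N ≤ s.u.length) (hNw : N ≤ s.w.length) (x : ℝ) :
    opNorm (transferM lam E (W α x N)) ≤ 3 * b ^ 3 := by
  have hs1 : ∀ x, x <:+ s.u → opNorm (transferM lam E x) ≤ b := fun x hx => hs x (Or.inl hx)
  have hs2 : ∀ x, x <:+ s.w → opNorm (transferM lam E x) ≤ b := fun x hx => hs x (Or.inr hx)
  obtain ⟨u, w, d, e⟩ := s
  obtain ⟨dpos, epos, dle, ele, upos, wpos, ⟨r1, hd⟩, ⟨r2, he⟩, far1, far2, wu, ww, cover⟩ := h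
  simp only at *
  obtain ⟨i, r, hir⟩ := cover x
  set y := x - i * α - r with hy
  have hwin : ∀ L : ℕ, i + N ≤ L → W α y L = W α y i ++ (W α x N ++ W α (x + N * α) (L - (i + N))) := by
    intro L hL
    obtain ⟨k, rfl⟩ := Nat.exists_eq_add_of_le hL
    rw [W_add, W_add, List.append_assoc]
    congr 2
    · rw [← W_add_int α (y + i * α) r]; congr 1; rw [hy]; ring
    · rw [← W_add_int α _ r, Nat.add_sub_cancel_left]; congr 1; rw [hy]; push_cast; ring
  -- next block
  have next : ∀ z : ℝ, 1 - α - e ≤ z → z < 1 - α + d →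
      W α z u.length = u ∨ W α z w.length = w := by
    intro z z1 z2
    rcases lt_or_ge z (1 - α) with hz | hz
    · left; exact wu z (by linarith) (by linarith) hz
    · right; exact ww z hz (by linarith) (by linarith)
  have fin : ∀ b1 b2 : List ℝ, ∀ z : ℝ, ∀ r' : ℤ, y + b1.length * α = z + r' →
      W α y b1.length = b1 → W α z b2.length = b2 →
      i ≤ b1.length → N ≤ b2.length → (∀ x, x <:+ b1 → opNorm (transferM lam E x) ≤ b) →
      (∀ x, x <:+ b2 → opNorm (transferM lam E x) ≤ b) →
      opNorm (transferM lam E (W α x N)) ≤ 3 * b ^ 3 := by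
    intro b1 b2 z r' hz hb1' hb2' hi hN k1 k2
    have h1 := hwin (b1.length + b2.length) (by omega)
    rw [W_add, hb1', hz, W_add_int, hb2'] at h1
    exact two_blocks hb1 h1.symm (by simpa using hi) k1 k2
  rcases hir with ⟨c1, c2, c3⟩ | ⟨c1, c2, c3⟩
  · have hu := wu y (by linarith) (by linarith) c2
    rcases next (y + d) (by linarith) (by linarith) with hn | hn
    · exact fin u u (y + d) r1 (by linarith) hu hn c3.le hNu hs1 hs1
    · exact fin u w (y + d) r1 (by linarith) hu hn c3.le hNw hs1 hs2
  · have hu := ww y c1 (by linarith) (by linarith)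
    rcases next (y - e) (by linarith) (by linarith) with hn | hn
    · exact fin w u (y - e) r2 (by linarith) hu hn c3.le hNu hs2 hs1
    · exact fin w w (y - e) r2 (by linarith) hu hn c3.le hNw hs2 hs2

lemma sturmianWord_eq (α θ : ℝ) (N : ℕ) : sturmianWord α θ N = W α (θ + α) N := by
  unfold sturmianWord W
  have hl : (do
      let a ← List.range N
      pure (a : ℤ)) = (List.range N).map (fun a : ℕ => (a : ℤ)) := by
    exact List.flatMap_pure_eq_map _ _
  rw [hl, List.map_map]
  apply List.map_congr_left
  intro i _
  simp only [Function.comp, sturmian_eq_val]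
  congr 1; push_cast; ring

end SturmAux

namespace SturmAux

lemma gauss_prop {α : ℝ} (hirr : Irrational α) (h0 : 0 < α) (h1 : α < 1) (k : ℕ) :
    Irrational (cfGauss α k) ∧ 0 < cfGauss α k ∧ cfGauss α k < 1 := by
  induction k with
  | zero => exact ⟨hirr, h0, h1⟩
  | succ k ih =>
    obtain ⟨i1, i2, i3⟩ := ih
    have hi : Irrational (Int.fract (cfGauss α k)⁻¹) := by
      rw [Int.fract]; exact (irrational_inv_iff.2 i1).sub_intCast _
    refine ⟨hi, lt_of_le_of_ne (Int.fract_nonneg _) ?_, Int.fract_lt_one _⟩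
    have := hi.ne_zero
    exact this.symm

lemma gauss_eq {α : ℝ} (hirr : Irrational α) (h0 : 0 < α) (h1 : α < 1) (k : ℕ) :
    cfGauss α k * cfCoeff α (k + 1) + cfGauss α k * cfGauss α (k + 1) = 1 ∧ 1 ≤ cfCoeff α (k + 1) := by
  obtain ⟨i1, i2, i3⟩ := gauss_prop hirr h0 h1 k
  have hinv : 1 < (cfGauss α k)⁻¹ := (one_lt_inv₀ i2).2 i3
  constructor
  · have e : (cfCoeff α (k + 1) : ℝ) = (⌊(cfGauss α k)⁻¹⌋ : ℝ) := by
      simp only [cfCoeff, Nat.add_sub_cancel]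
      rw [natCast_floor_eq_intCast_floor (by positivity)]
    rw [e]
    simp only [cfGauss, Int.fract]
    field_simp
    ring
  · simp only [cfCoeff, Nat.add_sub_cancel]
    exact Nat.le_floor (by simpa using hinv.le)

lemma runL (α : ℝ) (m n : ℕ) {D ρ : ℝ} (hρ : 0 < ρ) (hD : 0 < D) (hd : (st α n).d = D)
    (he : (st α n).e = m * D + ρ) :
    (st α (n + m)).d = D ∧ (st α (n + m)).e = ρ ∧ (st α (n + m)).u.length = (st α n).u.length ∧
      (st α (n + m)).w.length = (st α n).w.length + m * (st α n).u.length := by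
  induction m generalizing n with
  | zero => simp [hd, he]
  | succ m ih =>
    have hm : (0 : ℝ) ≤ m * D := by positivity
    push_cast at he
    have hc : (st α n).d < (st α n).e := by rw [hd, he]; nlinarith
    have heq : st α (n + 1) = stepL (st α n) := by rw [st, step, if_pos hc]
    have := ih (n + 1) (by rw [heq]; exact hd) (by rw [heq]; simp only [stepL]; rw [he, hd]; ring)
    rw [show n + (m + 1) = n + 1 + m by ring]
    rw [heq] at this
    obtain ⟨a1, a2, a3, a4⟩ := this
    refine ⟨a1, a2, a3, ?_⟩
    rw [a4]; simp only [stepL, List.length_append]; ring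

lemma runR (α : ℝ) (m n : ℕ) {D ρ : ℝ} (hρ : 0 < ρ) (hD : 0 < D) (hd : (st α n).e = D)
    (he : (st α n).d = m * D + ρ) :
    (st α (n + m)).e = D ∧ (st α (n + m)).d = ρ ∧ (st α (n + m)).w.length = (st α n).w.length ∧
      (st α (n + m)).u.length = (st α n).u.length + m * (st α n).w.length := by
  induction m generalizing n with
  | zero => simp [hd, he]
  | succ m ih =>
    have hm : (0 : ℝ) ≤ m * D := by positivity
    push_cast at he
    have hc : ¬ (st α n).d < (st α n).e := by rw [hd, he]; nlinarith
    have heq : st α (n + 1) = stepR (st α n) := by rw [st, step, if_neg hc]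
    have := ih (n + 1) (by rw [heq]; exact hd) (by rw [heq]; simp only [stepR]; rw [he, hd]; ring)
    rw [show n + (m + 1) = n + 1 + m by ring]
    rw [heq] at this
    obtain ⟨a1, a2, a3, a4⟩ := this
    refine ⟨a1, a2, a3, ?_⟩
    rw [a4]; simp only [stepR, List.length_append]; ring

noncomputable def SS (α : ℝ) (k : ℕ) : ℕ := ∑ j ∈ Finset.Icc 1 k, cfCoeff α j

lemma SS_succ (α : ℝ) (k : ℕ) : SS α (k + 1) = SS α k + cfCoeff α (k + 1) := by
  unfold SS; rw [Finset.sum_Icc_succ_top (by omega)]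

lemma SS_mono (α : ℝ) {k l : ℕ} (h : k ≤ l) : SS α k ≤ SS α l := by
  induction l, h using Nat.le_induction with
  | base => exact le_rfl
  | succ l _ ih => rw [SS_succ]; omega

lemma SS_pos {α : ℝ} (hirr : Irrational α) (h0 : 0 < α) (h1 : α < 1) (k : ℕ) : 1 ≤ SS α (k + 1) := by
  rw [SS_succ]; have := (gauss_eq hirr h0 h1 k).2; omega

def OddLv (α : ℝ) (k : ℕ) (a b : ℕ) : Prop :=
  ∃ t > 0, (st α (SS α k - 1)).d = t ∧ (st α (SS α k - 1)).e = t * cfGauss α k ∧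
    a ≤ (st α (SS α k - 1)).u.length ∧ b ≤ (st α (SS α k - 1)).w.length

def EvenLv (α : ℝ) (k : ℕ) (a b : ℕ) : Prop :=
  ∃ t > 0, (st α (SS α k - 1)).e = t ∧ (st α (SS α k - 1)).d = t * cfGauss α k ∧
    a ≤ (st α (SS α k - 1)).u.length ∧ b ≤ (st α (SS α k - 1)).w.length

lemma first_level {α : ℝ} (hirr : Irrational α) (h0 : 0 < α) (h1 : α < 1) : OddLv α 1 1 1 := by
  obtain ⟨e1, e2⟩ := gauss_eq hirr h0 h1 0
  obtain ⟨i1, i2, i3⟩ := gauss_prop hirr h0 h1 1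
  have hS : SS α 1 = cfCoeff α 1 := by simp [SS]
  have := runL α (cfCoeff α 1 - 1) 0 (D := α) (ρ := α * cfGauss α 1) (by positivity) h0 rfl (by
    simp only [st]
    simp only [cfGauss, Nat.zero_add] at e1 e2 ⊢
    rw [Nat.cast_sub e2]; push_cast; linarith)
  rw [Nat.zero_add] at this
  obtain ⟨a1, a2, a3, a4⟩ := this
  refine ⟨α, h0, ?_, ?_, ?_, ?_⟩ <;> rw [hS]
  · exact a1
  · exact a2
  · rw [a3]; simp [st]
  · rw [a4]; simp [st]

lemma odd_even {α : ℝ} (hirr : Irrational α) (h0 : 0 < α) (h1 : α < 1) {k a b : ℕ} (hk : 1 ≤ k)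
    (h : OddLv α k a b) : EvenLv α (k + 1) (a + b) b := by
  obtain ⟨t, ht, hd, he, hu, hw⟩ := h
  obtain ⟨e1, e2⟩ := gauss_eq hirr h0 h1 k
  obtain ⟨i1, i2, i3⟩ := gauss_prop hirr h0 h1 k
  obtain ⟨j1, j2, j3⟩ := gauss_prop hirr h0 h1 (k + 1)
  have hSp : 1 ≤ SS α k := by
    obtain ⟨l, rfl⟩ := Nat.exists_eq_add_of_le' hk
    exact SS_pos hirr h0 h1 l
  have hS : SS α (k + 1) - 1 = (SS α k - 1) + cfCoeff α (k + 1) := by rw [SS_succ]; omega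
  obtain ⟨a1, a2, a3, a4⟩ := runR α (cfCoeff α (k + 1)) (SS α k - 1) (D := t * cfGauss α k)
    (ρ := t * cfGauss α k * cfGauss α (k + 1)) (by positivity) (by positivity) he (by
      rw [hd]; linear_combination (-t) * e1)
  rw [← hS] at a1 a2 a3 a4
  refine ⟨_, by positivity, a1, a2, ?_, ?_⟩
  · rw [a4]
    exact add_le_add hu (hw.trans (Nat.le_mul_of_pos_left _ e2))
  · rw [a3]; exact hw

lemma even_odd {α : ℝ} (hirr : Irrational α) (h0 : 0 < α) (h1 : α < 1) {k a b : ℕ} (hk : 1 ≤ k)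
    (h : EvenLv α k a b) : OddLv α (k + 1) a (b + a) := by
  obtain ⟨t, ht, hd, he, hu, hw⟩ := h
  obtain ⟨e1, e2⟩ := gauss_eq hirr h0 h1 k
  obtain ⟨i1, i2, i3⟩ := gauss_prop hirr h0 h1 k
  obtain ⟨j1, j2, j3⟩ := gauss_prop hirr h0 h1 (k + 1)
  have hSp : 1 ≤ SS α k := by
    obtain ⟨l, rfl⟩ := Nat.exists_eq_add_of_le' hk
    exact SS_pos hirr h0 h1 l
  have hS : SS α (k + 1) - 1 = (SS α k - 1) + cfCoeff α (k + 1) := by rw [SS_succ]; omega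
  obtain ⟨a1, a2, a3, a4⟩ := runL α (cfCoeff α (k + 1)) (SS α k - 1) (D := t * cfGauss α k)
    (ρ := t * cfGauss α k * cfGauss α (k + 1)) (by positivity) (by positivity) he (by
      rw [hd]; linear_combination (-t) * e1)
  rw [← hS] at a1 a2 a3 a4
  refine ⟨_, by positivity, a1, a2, ?_, ?_⟩
  · rw [a3]; exact hu
  · rw [a4]
    exact add_le_add hw (hu.trans (Nat.le_mul_of_pos_left _ e2))

lemma OddLv.mono {α : ℝ} {k a b a' b' : ℕ} (h : OddLv α k a b) (ha : a' ≤ a) (hb : b' ≤ b) :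
    OddLv α k a' b' := by
  obtain ⟨t, ht, hd, he, hu, hw⟩ := h
  exact ⟨t, ht, hd, he, ha.trans hu, hb.trans hw⟩

lemma odd_levels {α : ℝ} (hirr : Irrational α) (h0 : 0 < α) (h1 : α < 1) (j : ℕ) :
    OddLv α (2 * j + 1) (2 ^ j) (2 ^ j) := by
  induction j with
  | zero => exact first_level hirr h0 h1
  | succ j ih =>
    have h := even_odd hirr h0 h1 (by omega) (odd_even hirr h0 h1 (by omega) ih)
    exact h.mono (by rw [pow_succ]; omega) (by rw [pow_succ]; omega)

lemma st_antitone {α : ℝ} (hirr : Irrational α) (h0 : 0 < α) (h1 : α < 1) {m n : ℕ} (h : m ≤ n) :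
    (st α n).d ≤ (st α m).d ∧ (st α n).e ≤ (st α m).e := by
  induction n, h using Nat.le_induction with
  | base => exact ⟨le_rfl, le_rfl⟩
  | succ n _ ih =>
    have hi := inv_st hirr h0 h1 n
    have := hi.dpos
    have := hi.epos
    rw [st, step]
    split_ifs
    · simp only [stepL]; exact ⟨ih.1, by linarith⟩
    · simp only [stepR]; exact ⟨by linarith, ih.2⟩

lemma good_levels {α : ℝ} (hirr : Irrational α) (h0 : 0 < α) (h1 : α < 1) {n : ℕ}
    (h : SS α 2 - 1 ≤ n) : (st α n).d ≤ 1 - α ∧ (st α n).e ≤ α := by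
  have o := first_level hirr h0 h1
  obtain ⟨t', ht', hd', he', -, -⟩ := odd_even hirr h0 h1 le_rfl o
  obtain ⟨t, ht, hd, he, -, -⟩ := o
  have g1 := (gauss_prop hirr h0 h1 1).2.2
  have g2 := (gauss_prop hirr h0 h1 2).2.2
  have m12 : SS α 1 - 1 ≤ SS α 2 - 1 := by
    have := SS_mono α (show 1 ≤ 2 by norm_num); omega
  have i1 := inv_st hirr h0 h1 (SS α 1 - 1)
  have i2 := inv_st hirr h0 h1 (SS α 2 - 1)
  have A := st_antitone hirr h0 h1 h
  have B := st_antitone hirr h0 h1 m12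
  have hde := i1.dle
  have hee := i2.ele
  norm_num at hd' he'
  constructor
  · have : t' * cfGauss α 2 ≤ t' := mul_le_of_le_one_right ht'.le g2.le
    linarith [A.1]
  · have : t * cfGauss α 1 ≤ t := mul_le_of_le_one_right ht.le g1.le
    linarith [A.2, B.2]

lemma density {α : ℝ} (hbd : BoundedDensity α) : ∃ D : ℕ, 1 ≤ D ∧ ∀ k, 1 ≤ k → SS α k ≤ D * k := by
  obtain ⟨c, hc⟩ := hbd
  rw [Filter.eventually_map, Filter.eventually_atTop] at hc
  obtain ⟨N, hN⟩ := hc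
  refine ⟨⌈c⌉₊ + SS α (N + 1) + 1, by omega, fun k hk => ?_⟩
  rcases le_total k (N + 1) with h | h
  · calc SS α k ≤ SS α (N + 1) := SS_mono α h
      _ ≤ (⌈c⌉₊ + SS α (N + 1) + 1) * 1 := by omega
      _ ≤ _ := Nat.mul_le_mul_left _ hk
  · have h1 := hN k (by omega)
    have hk0 : (0 : ℝ) < k := by exact_mod_cast hk
    have h2 : ((SS α k : ℕ) : ℝ) ≤ c * k := by
      simp only [SS]; push_cast
      rw [one_div, inv_mul_le_iff₀ hk0] at h1
      linarith
    have h3 : ((SS α k : ℕ) : ℝ) ≤ ((⌈c⌉₊ * k : ℕ) : ℝ) := by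
      push_cast
      exact h2.trans (mul_le_mul_of_nonneg_right (Nat.le_ceil c) hk0.le)
    have h4 : SS α k ≤ ⌈c⌉₊ * k := by exact_mod_cast h3
    exact h4.trans (Nat.mul_le_mul_right _ (by omega))

theorem main_transfer_matrices_polynomially_bounded
    (α : ℝ) (hirr : Irrational α) (hα : α ∈ Set.Ioo (0 : ℝ) 1) (hbd : BoundedDensity α)
    (lam : ℝ) (hlam : lam ≠ 0) :
    ∃ C > (0 : ℝ), ∃ μ > (0 : ℝ), ∀ θ ∈ Set.Ico (0 : ℝ) 1, ∀ θ' ∈ Set.Ico (0 : ℝ) 1,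
      ∀ H : lp (fun _ : ℤ => ℂ) 2 →L[ℂ] lp (fun _ : ℤ => ℂ) 2,
        (∀ u : lp (fun _ : ℤ => ℂ) 2, ∀ n : ℤ,
      H u n = u (n + 1) + u (n - 1) + (lam * sturmian α θ' n : ℝ) * u n) →
        ∀ E ∈ spectrum ℂ H, ∀ n : ℕ, 0 < n →
          opNorm (transferM lam E (sturmianWord α θ n)) ≤ C * (n : ℝ) ^ μ := by
  obtain ⟨h0, h1⟩ := hα
  obtain ⟨D, hD1, hD⟩ := density hbd
  obtain ⟨κ, hκ⟩ := pow_unbounded_of_one_lt (G lam) (show (1 : ℝ) < 2 by norm_num)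
  have hG1 : 1 ≤ G lam := by
    have := K2_pos lam
    unfold G
    have h2 : 1 ≤ (K2 lam + 1) ^ 2 := one_le_pow₀ (by linarith)
    nlinarith
  set n0 := SS α 2 - 1 with hn0
  set K : ℝ := 4 + 2 * |lam| with hK
  have hK1 : 1 ≤ K := by linarith [abs_nonneg lam]
  set B0 : ℝ := K ^ (4 * ((st α n0).u.length + (st α n0).w.length)) with hB0
  have hB01 : 1 ≤ B0 := one_le_pow₀ hK1
  set e : ℕ := κ * (3 * D) * 3 with he
  refine ⟨3 * B0 ^ 3 * 4 ^ e, by positivity, ((e + 1 : ℕ) : ℝ), by positivity, ?_⟩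
  intro θ _ θ' _ H hH E hE N hN
  have hEn := spectrum_bound H hH hE
  have hgood : ∀ m, n0 ≤ m → ‖(transferM lam E (st α m).u).trace‖ ≤ 2 ∨
      ‖(transferM lam E (st α m).w).trace‖ ≤ 2 := by
    intro m hm
    obtain ⟨g1, g2⟩ := good_levels hirr h0 h1 hm
    exact spectrum_trace h0 h1 H hH hE (inv_st hirr h0 h1 m) g1 g2
  set j := Nat.clog 2 N + 1 with hj
  have hj1 : N ≤ 2 ^ j := by
    rw [hj, pow_succ]
    have := Nat.le_pow_clog (b := 2) (by norm_num) N
    omega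
  have hj2 : 2 ^ j ≤ 4 * N := by
    rcases Nat.lt_or_ge 1 N with h | h
    · have h3 := Nat.pow_pred_clog_lt_self (b := 2) (by norm_num) h
      have h4 : 0 < Nat.clog 2 N := Nat.clog_pos (by norm_num) h
      obtain ⟨c, hc⟩ : ∃ c, Nat.clog 2 N = c + 1 := ⟨Nat.clog 2 N - 1, by omega⟩
      rw [hj, hc, pow_succ, pow_succ]
      rw [hc] at h3
      simp only [Nat.pred_eq_sub_one, Nat.add_sub_cancel] at h3
      omega
    · have : N = 1 := by omega
      subst this
      simp [hj]
  obtain ⟨t, -, -, -, hu, hw⟩ := odd_levels hirr h0 h1 j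
  set n := SS α (2 * j + 1) - 1 with hn
  have hn0n : n0 ≤ n := by
    have := SS_mono α (show 2 ≤ 2 * j + 1 by omega); omega
  obtain ⟨m, hm⟩ := Nat.exists_eq_add_of_le hn0n
  have hmle : m ≤ 3 * D * j := by
    have := hD (2 * j + 1) (by omega)
    have h2 : D * (2 * j + 1) ≤ D * (3 * j) := Nat.mul_le_mul_left _ (by omega)
    have h3 : D * (3 * j) = 3 * D * j := by ring
    omega
  have hgr := growth (K := K) (by linarith) hgood m
  rw [← hm] at hgr
  have hb1 : 1 ≤ G lam ^ m * B0 := one_le_mul_of_one_le_of_one_le (one_le_pow₀ hG1) hB01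
  have hfin := window_bound hb1 (inv_st hirr h0 h1 n) (fun x hx => growth_opNorm hgr hx)
    (hj1.trans hu) (hj1.trans hw) (θ + α)
  rw [sturmianWord_eq]
  refine hfin.trans ?_
  have hGm : G lam ^ m ≤ (4 * N : ℝ) ^ (κ * (3 * D)) := by
    calc G lam ^ m ≤ G lam ^ (3 * D * j) := pow_le_pow_right₀ hG1 hmle
      _ ≤ (2 ^ κ) ^ (3 * D * j) := pow_le_pow_left₀ (by linarith) hκ.le _
      _ = (2 ^ j) ^ (κ * (3 * D)) := by rw [← pow_mul, ← pow_mul]; congr 1; ring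
      _ ≤ (4 * N : ℝ) ^ (κ * (3 * D)) := by
        refine pow_le_pow_left₀ (by positivity) ?_ _
        exact_mod_cast hj2
  have hN1 : (1 : ℝ) ≤ N := by exact_mod_cast hN
  rw [Real.rpow_natCast]
  calc 3 * (G lam ^ m * B0) ^ 3 ≤ 3 * ((4 * N : ℝ) ^ (κ * (3 * D)) * B0) ^ 3 := by gcongr
    _ = 3 * B0 ^ 3 * 4 ^ e * (N : ℝ) ^ e := by
      rw [he, pow_mul _ _ 3, pow_mul (N : ℝ) _ 3, mul_pow 4 (N : ℝ)]; ring
    _ ≤ 3 * B0 ^ 3 * 4 ^ e * (N : ℝ) ^ (e + 1) := by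
      gcongr
      omega

end SturmAux

theorem transfer_matrices_polynomially_bounded
    (α : ℝ) (hirr : Irrational α) (hα : α ∈ Set.Ioo (0 : ℝ) 1) (hbd : BoundedDensity α)
    (lam : ℝ) (hlam : lam ≠ 0) :
    ∃ C > (0 : ℝ), ∃ μ > (0 : ℝ), ∀ θ ∈ Set.Ico (0 : ℝ) 1, ∀ θ' ∈ Set.Ico (0 : ℝ) 1,
      ∀ H : lp (fun _ : ℤ => ℂ) 2 →L[ℂ] lp (fun _ : ℤ => ℂ) 2,
        (∀ u : lp (fun _ : ℤ => ℂ) 2, ∀ n : ℤ,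
      H u n = u (n + 1) + u (n - 1) + (lam * sturmian α θ' n : ℝ) * u n) →
        ∀ E ∈ spectrum ℂ H, ∀ n : ℕ, 0 < n →
          opNorm (transferM lam E (sturmianWord α θ n)) ≤ C * (n : ℝ) ^ μ := by
  exact SturmAux.main_transfer_matrices_polynomially_bounded α hirr hα hbd lam hlam
end
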